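/- arXiv:1806.00939 — 9 statements merged into one kernel-verified Lean document; each statement's English description precedes it below -/
import Mathlib

section
/- Let F be a field, M, K, N, d positive integers, and p a multivariate polynomial in M variables over F of total degree at most d. Let β_1, …, β_K ∈ F be pairwise distinct and α_1, …, α_N ∈ F be pairwise distinct. For a dataset X = (X_1, …, X_K) ∈ (F^M)^K, let u_X : F → F^M be the unique coordinatewise polynomial map of degree at most K−1 satisfying u_X(β_j) = X_j for all j ∈ {1,…,K}. Then for every subset 𝒦 ⊆ {1,…,N} with |𝒦| ≥ (K−1)d + 1 and any two datasets X, X′ ∈ (F^M)^K such that p(u_X(α_i)) = p(u_{X′}(α_i)) for all i ∈ 𝒦, one has p(X_j) = p(X′_j) for every j ∈ {1,…,K}. (Hence the Lagrange Coded Computing scheme is S-resilient whenever (K−1)d + S + 1 ≤ N.) -/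
/-!
Substituting the encoding curve `u_X` into `p` gives a univariate polynomial `p ∘ u_X` of degree at
most `d * (K - 1)`, whose value at `α i` is the result of worker `i` and whose value at `β j` is the
desired output `p (X j)`. Agreement at more than `d * (K - 1)` points forces `p ∘ u_X = p ∘ u_X'`,
and evaluating this identity at the nodes `β j` gives the claim.
-/

open Polynomial

section PolynomialCurve

variable {σ R : Type*}

theorem eval_mvPolynomial_aeval [CommSemiring R] (f : σ → R[X]) (p : MvPolynomial σ R) (x : R) :
    (MvPolynomial.aeval f p).eval x = MvPolynomial.eval (fun m => (f m).eval x) p :=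
  MvPolynomial.comp_aeval_apply f (aeval x) p

theorem mvPolynomial_aeval_eq_of_eval_index_eq [CommRing R] [IsDomain R] {κ : Type*} {n d : ℕ}
    {p : MvPolynomial σ R} (hp : p.totalDegree ≤ d) {f g : σ → R[X]}
    (hf : ∀ m, (f m).natDegree ≤ n) (hg : ∀ m, (g m).natDegree ≤ n)
    {t : Finset κ} {α : κ → R} (hα : Set.InjOn α t) (hcard : d * n < t.card)
    (hagree : ∀ i ∈ t, MvPolynomial.eval (fun m => (f m).eval (α i)) p =
      MvPolynomial.eval (fun m => (g m).eval (α i)) p) :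
    MvPolynomial.aeval f p = MvPolynomial.aeval g p := by
  have degree_lt {h : σ → R[X]} (hh : ∀ m, (h m).natDegree ≤ n) :
      (MvPolynomial.aeval h p).degree < t.card :=
    (degree_le_of_natDegree_le (MvPolynomial.aeval_natDegree_le p hp h hh)).trans_lt
      (Nat.cast_lt.mpr hcard)
  refine eq_of_degrees_lt_of_eval_index_eq t hα (degree_lt hf) (degree_lt hg) fun i hi => ?_
  simpa only [eval_mvPolynomial_aeval] using hagree i hi

end PolynomialCurve

section LagrangeEncoding

variable {F ι σ : Type*} [Field F] [DecidableEq ι] {s : Finset ι} {β : ι → F}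

/-- The encoding polynomial `u_X` of a dataset `X` with nodes `β j`, `j ∈ s`, given as the family
of its coordinates: coordinate `m` is the Lagrange interpolant of the values `X j m`. -/
noncomputable def lagrangeEncoding (s : Finset ι) (β : ι → F) (X : ι → σ → F) : σ → F[X] :=
  fun m => Lagrange.interpolate s β (fun j => X j m)

theorem natDegree_lagrangeEncoding_le (hβ : Set.InjOn β s) (X : ι → σ → F) (m : σ) :
    (lagrangeEncoding s β X m).natDegree ≤ s.card - 1 :=
  natDegree_le_of_degree_le (Lagrange.degree_interpolate_le _ hβ)

theorem eval_lagrangeEncoding_at_node (hβ : Set.InjOn β s) (X : ι → σ → F) {j : ι} (hj : j ∈ s) :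
    (fun m => (lagrangeEncoding s β X m).eval (β j)) = X j :=
  funext fun _ => Lagrange.eval_interpolate_at_node _ hβ hj

theorem lcc_resiliency_general {κ : Type*} {d : ℕ}
    {p : MvPolynomial σ F} (hp : p.totalDegree ≤ d) (hβ : Set.InjOn β s)
    {t : Finset κ} {α : κ → F} (hα : Set.InjOn α t) (hcard : (s.card - 1) * d + 1 ≤ t.card)
    {X X' : ι → σ → F}
    (hagree : ∀ i ∈ t,
      MvPolynomial.eval (fun m => (lagrangeEncoding s β X m).eval (α i)) p =
        MvPolynomial.eval (fun m => (lagrangeEncoding s β X' m).eval (α i)) p)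
    {j : ι} (hj : j ∈ s) : MvPolynomial.eval (X j) p = MvPolynomial.eval (X' j) p := by
  have hcomp : MvPolynomial.aeval (lagrangeEncoding s β X) p =
      MvPolynomial.aeval (lagrangeEncoding s β X') p :=
    mvPolynomial_aeval_eq_of_eval_index_eq hp (natDegree_lagrangeEncoding_le hβ X)
      (natDegree_lagrangeEncoding_le hβ X') hα (by rwa [mul_comm]) hagree
  simpa only [eval_mvPolynomial_aeval, eval_lagrangeEncoding_at_node hβ _ hj]
    using congrArg (eval (β j)) hcomp

end LagrangeEncoding

/-- **S-resiliency of Lagrange Coded Computing.**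
Let `p` be a multivariate polynomial in `M` variables of total degree at most `d`,
`β_1,…,β_K` pairwise distinct interpolation nodes and `α_1,…,α_N` pairwise distinct
evaluation points.  For a dataset `X`, the Lagrange encoding polynomial `u_X` is the
unique coordinatewise polynomial of degree `≤ K-1` with `u_X (β j) = X j`
(realized by `Lagrange.interpolate`).  If two datasets produce the same worker results
`p (u_X (α i))` on a set of at least `(K-1)d + 1` workers, then all desired outputs
`p (X j)` coincide. -/
theorem lcc_resiliency (F : Type*) [Field F] (M K N d : ℕ)
    (hM : 0 < M) (hK : 0 < K) (hN : 0 < N) (hd : 0 < d)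
    (p : MvPolynomial (Fin M) F) (hp : p.totalDegree ≤ d)
    (β : Fin K → F) (hβ : Function.Injective β)
    (α : Fin N → F) (hα : Function.Injective α)
    (𝒦 : Finset (Fin N)) (h𝒦 : (K - 1) * d + 1 ≤ 𝒦.card)
    (X X' : Fin K → Fin M → F)
    (hagree : ∀ i ∈ 𝒦,
      MvPolynomial.eval
          (fun m => (Lagrange.interpolate Finset.univ β (fun j => X j m)).eval (α i)) p =
        MvPolynomial.eval
          (fun m => (Lagrange.interpolate Finset.univ β (fun j => X' j m)).eval (α i)) p) :
    ∀ j : Fin K, MvPolynomial.eval (X j) p = MvPolynomial.eval (X' j) p := by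
  exact fun j => lcc_resiliency_general hp hβ.injOn hα.injOn
    (by simpa only [Finset.card_univ, Fintype.card_fin] using h𝒦) hagree (Finset.mem_univ j)
end

section
/- Let F be a field, K, T, N positive integers, β_1, …, β_{K+T} ∈ F pairwise distinct, and α_1, …, α_N ∈ F pairwise distinct with α_r ≠ β_t for all r ∈ {1,…,N} and t ∈ {1,…,K}. Then the T × N matrix U^bottom with entries U^bottom_{s,r} = ∏_{t ∈ {1,…,K+T} \ {K+s}} (α_r − β_t)/(β_{K+s} − β_t), for s ∈ {1,…,T} and r ∈ {1,…,N}, is an MDS matrix: every T × T submatrix of U^bottom is invertible. -/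
/-!
A polynomial of degree less than `n` is determined by its values at any `n` distinct points, so the
matrix of values of a Lagrange basis at `n` distinct points is invertible: its inverse is the matrix
obtained by exchanging nodes and evaluation points. Evaluate the Lagrange basis of
`β_1, …, β_{K+T}` at `β_1, …, β_K` and at `T` of the points `α_r`. The resulting matrix is block
upper triangular with diagonal blocks the identity and the chosen `T × T` submatrix of `U^bottom`,
which is therefore invertible as well.
-/

open Finset Polynomial
open Function (Injective)

section LagrangeBasis

variable {F ι κ : Type*} [Field F] [DecidableEq ι] [DecidableEq κ]

theorem eval_lagrangeBasis (s : Finset ι) (v : ι → F) (i : ι) (x : F) :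
    (Lagrange.basis s v i).eval x = ∏ j ∈ s.erase i, (x - v j) / (v i - v j) := by
  simp [Lagrange.basis, Lagrange.basisDivisor, eval_prod, div_eq_inv_mul]

theorem lagrangeBasis_univ_comp_equiv [Fintype ι] [Fintype κ] (e : ι ≃ κ) (v : κ → F) (i : ι) :
    Lagrange.basis univ (v ∘ e) i = Lagrange.basis univ v (e i) :=
  prod_equiv e (by simp) (by simp)

end LagrangeBasis

/-- The values of the Lagrange basis polynomials of the nodes `v` (rows) at the points `x`
(columns). For the nodes `β` and the points `α` this is the LCC encoding matrix `U`. -/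
noncomputable def lagrangeMatrix {F ι κ : Type*} [Field F] [Fintype ι] [DecidableEq ι]
    (v : ι → F) (x : κ → F) : Matrix ι κ F :=
  Matrix.of fun i j => (Lagrange.basis univ v i).eval (x j)

namespace lagrangeMatrix

variable {F ι κ γ : Type*} [Field F] [Fintype ι] [DecidableEq ι]

theorem apply (v : ι → F) (x : κ → F) (i : ι) (j : κ) :
    lagrangeMatrix v x i j = (Lagrange.basis univ v i).eval (x j) :=
  rfl

theorem self {v : ι → F} (hv : Injective v) : lagrangeMatrix v v = 1 := by
  ext i j
  rw [apply]
  obtain rfl | hij := eq_or_ne i j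
  · rw [Lagrange.eval_basis_self hv.injOn (mem_univ i), Matrix.one_apply_eq]
  · rw [Lagrange.eval_basis_of_ne hij (mem_univ j), Matrix.one_apply_ne hij]

variable [Fintype κ] [DecidableEq κ]

theorem mul_of_card_le {v : ι → F} {x : κ → F} (hv : Injective v) (hx : Injective x)
    (hcard : Fintype.card ι ≤ Fintype.card κ) (y : γ → F) :
    lagrangeMatrix v x * lagrangeMatrix x y = lagrangeMatrix v y := by
  ext i k
  have degree_lt : (Lagrange.basis univ v i).degree < #(univ : Finset κ) := by
    have card_pos : 0 < Fintype.card ι := Fintype.card_pos_iff.mpr ⟨i⟩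
    rw [Lagrange.degree_basis hv.injOn (mem_univ i), card_univ, card_univ, Nat.cast_lt]
    lia
  have interpolated := congrArg (eval (y k)) (Lagrange.eq_interpolate hx.injOn degree_lt)
  simpa [Matrix.mul_apply, apply, Lagrange.interpolate_apply, eval_finsetSum]
    using interpolated.symm

theorem isUnit {v x : ι → F} (hv : Injective v) (hx : Injective x) :
    IsUnit (lagrangeMatrix v x) := by
  have mul_swap : lagrangeMatrix v x * lagrangeMatrix x v = 1 := by
    rw [mul_of_card_le hv hx le_rfl, self hv]
  exact .of_mul_eq_one _ mul_swap

theorem sumElim_eq_fromBlocks {v : ι ⊕ κ → F} (hv : Injective v) (x : γ → F) :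
    lagrangeMatrix v (Sum.elim (v ∘ Sum.inl) x) =
      Matrix.fromBlocks 1 ((lagrangeMatrix v x).submatrix Sum.inl id)
        0 ((lagrangeMatrix v x).submatrix Sum.inr id) := by
  have at_nodes (i : ι ⊕ κ) (j : ι) :
      lagrangeMatrix v (Sum.elim (v ∘ Sum.inl) x) i (Sum.inl j) =
        (1 : Matrix (ι ⊕ κ) (ι ⊕ κ) F) i (Sum.inl j) :=
    congrFun₂ (self hv) i (Sum.inl j)
  ext (i | i) (j | j)
  · simp [at_nodes, Matrix.one_apply]
  · rfl
  · simp [at_nodes]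
  · rfl

theorem isUnit_submatrix_inr {v : ι ⊕ κ → F} {x : κ → F} (hv : Injective v) (hx : Injective x)
    (hxv : ∀ j i, x j ≠ v (Sum.inl i)) :
    IsUnit ((lagrangeMatrix v x).submatrix Sum.inr id) := by
  have points_injective : Injective (Sum.elim (v ∘ Sum.inl) x) :=
    (hv.comp Sum.inl_injective).sumElim hx fun i j => (hxv j i).symm
  have blocks_isUnit := isUnit hv points_injective
  rw [sumElim_eq_fromBlocks hv, Matrix.isUnit_fromBlocks_zero₂₁] at blocks_isUnit
  exact blocks_isUnit.2

end lagrangeMatrix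

/-- **The bottom block of the LCC encoding matrix is MDS.**
With pairwise distinct `β_1,…,β_{K+T}`, pairwise distinct `α_1,…,α_N`, and
`α_r ≠ β_t` for all `r ∈ [N]`, `t ∈ [K]`, the `T × N` matrix with entries
`U^bottom_{s,r} = ∏_{t ≠ K+s} (α_r − β_t)/(β_{K+s} − β_t)` has every `T × T`
submatrix invertible. -/
theorem lcc_bottom_matrix_mds (F : Type*) [Field F] (K T N : ℕ)
    (hK : 0 < K) (hT : 0 < T) (hN : 0 < N)
    (β : Fin (K + T) → F) (hβ : Function.Injective β)
    (α : Fin N → F) (hα : Function.Injective α)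
    (hαβ : ∀ (r : Fin N) (t : Fin K), α r ≠ β (Fin.castAdd T t))
    (Ubot : Matrix (Fin T) (Fin N) F)
    (hU : ∀ s r, Ubot s r =
      ∏ t ∈ Finset.univ.erase (Fin.natAdd K s),
        (α r - β t) / (β (Fin.natAdd K s) - β t)) :
    ∀ σ : Fin T → Fin N, Function.Injective σ → IsUnit (Ubot.submatrix id σ) := by
  intro σ hσ
  have submatrix_eq : Ubot.submatrix id σ =
      (lagrangeMatrix (β ∘ finSumFinEquiv) (α ∘ σ)).submatrix Sum.inr id := by
    ext s r
    simp only [Matrix.submatrix_apply, id, hU, lagrangeMatrix.apply,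
      lagrangeBasis_univ_comp_equiv, eval_lagrangeBasis, finSumFinEquiv_apply_right,
      Function.comp_apply]
  rw [submatrix_eq]
  refine lagrangeMatrix.isUnit_submatrix_inr (hβ.comp finSumFinEquiv.injective) (hα.comp hσ) ?_
  intro r t
  simpa only [Function.comp_apply, finSumFinEquiv_apply_left] using hαβ (σ r) t
end

section
/- Let F be a finite field, M, K, T, N positive integers, β_1, …, β_{K+T} ∈ F pairwise distinct, and α_1, …, α_N ∈ F pairwise distinct with {α_1,…,α_N} ∩ {β_1,…,β_K} = ∅. For X ∈ (F^M)^K and keys Z = (Z_1,…,Z_T) ∈ (F^M)^T, let u_{X,Z} : F → F^M be the unique coordinatewise polynomial map of degree at most K+T−1 with u_{X,Z}(β_j) = X_j for j ∈ {1,…,K} and u_{X,Z}(β_{K+t}) = Z_t for t ∈ {1,…,T}. Then for every subset 𝒯 ⊆ {1,…,N} of size T and every fixed X, the map Z ↦ (u_{X,Z}(α_i))_{i∈𝒯} from (F^M)^T to (F^M)^𝒯 is a bijection. Consequently, if Z is uniformly distributed on (F^M)^T, the tuple of coded variables (u_{X,Z}(α_i))_{i∈𝒯} is uniformly distributed on (F^M)^𝒯,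 identically for every X; i.e., the LCC encoding is T-private. -/
/-!
A polynomial of degree less than `K + T` is determined by its values at any `K + T` distinct points.
The nodes carrying `X` together with the `T` colluding evaluation points form such a set, so
interpolating through them recovers the encoding polynomial, and hence the keys, from the view.
This recovery map is again a Lagrange encoding, with the key nodes and the evaluation points
interchanged, so the same argument shows that the two maps are mutually inverse.
-/

open Finset Function

section LagrangeEncode

variable {F ι ι' κ : Type*} [Field F] [Fintype ι] [DecidableEq ι] [Fintype ι'] [DecidableEq ι']

/-- The coordinatewise Lagrange interpolant `F → F^κ` through the points `(v i, y i)`, as a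
function; the encoding `u_{X,Z}` is the case where `y` is the data `X` followed by the keys `Z`. -/
noncomputable def lagrangeEncode (v : ι → F) (y : ι → κ → F) (a : F) (m : κ) : F :=
  (Lagrange.interpolate univ v fun i => y i m).eval a

theorem lagrangeEncode_node {v : ι → F} (hv : Injective v) (y : ι → κ → F) (i : ι) :
    lagrangeEncode v y (v i) = y i :=
  funext fun _ => Lagrange.eval_interpolate_at_node _ hv.injOn (mem_univ i)

theorem lagrangeEncode_resample {v : ι → F} (hv : Injective v) {w : ι' → F} (hw : Injective w)
    (hcard : Fintype.card ι ≤ Fintype.card ι') (y : ι → κ → F) :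
    lagrangeEncode w (fun k => lagrangeEncode v y (w k)) = lagrangeEncode v y := by
  funext a m
  have hdeg : (Lagrange.interpolate univ v fun i => y i m).degree < #(univ : Finset ι') :=
    (Lagrange.degree_interpolate_lt _ hv.injOn).trans_le (Nat.cast_le.2 hcard)
  exact congrArg (Polynomial.eval a) (Lagrange.eq_interpolate hw.injOn hdeg).symm

theorem lagrangeEncode_comp_equiv {v : ι → F} (hv : Injective v) (e : ι' ≃ ι) (y : ι → κ → F) :
    lagrangeEncode (v ∘ e) (y ∘ e) = lagrangeEncode v y := by
  have hnode : y ∘ e = fun k => lagrangeEncode v y ((v ∘ e) k) :=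
    funext fun k => (lagrangeEncode_node hv y (e k)).symm
  rw [hnode, lagrangeEncode_resample hv (hv.comp e.injective) (Fintype.card_congr e).ge]

end LagrangeEncode

section KeyExchange

variable {F σ τ ρ κ : Type*} [Field F] [Fintype σ] [DecidableEq σ] [Fintype τ] [DecidableEq τ]
  [Fintype ρ] {b : σ → F} {c : τ → F} {a : ρ → F}

theorem leftInverse_lagrangeEncode_sumElim [DecidableEq ρ] (hbc : Injective (Sum.elim b c))
    (hba : Injective (Sum.elim b a)) (hcard : Fintype.card τ ≤ Fintype.card ρ) (X : σ → κ → F) :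
    LeftInverse (fun W t => lagrangeEncode (Sum.elim b a) (Sum.elim X W) (c t))
      (fun Z i => lagrangeEncode (Sum.elim b c) (Sum.elim X Z) (a i)) := by
  intro Z
  let u := lagrangeEncode (Sum.elim b c) (Sum.elim X Z)
  have hsamples : Sum.elim X (fun i => u (a i)) = fun k => u (Sum.elim b a k) := by
    funext k
    rcases k with j | i
    · exact (lagrangeEncode_node hbc (Sum.elim X Z) (.inl j)).symm
    · rfl
  have hrecover : lagrangeEncode (Sum.elim b a) (Sum.elim X fun i => u (a i)) = u := by
    rw [hsamples]
    exact lagrangeEncode_resample hbc hba (by simpa using hcard) _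
  funext t
  calc lagrangeEncode (Sum.elim b a) (Sum.elim X fun i => u (a i)) (c t)
      = u (c t) := congrFun hrecover (c t)
    _ = Z t := lagrangeEncode_node hbc (Sum.elim X Z) (.inr t)

theorem bijective_lagrangeEncode_sumElim (hbc : Injective (Sum.elim b c))
    (hba : Injective (Sum.elim b a)) (hcard : Fintype.card τ = Fintype.card ρ) (X : σ → κ → F) :
    Bijective fun (Z : τ → κ → F) (i : ρ) =>
      lagrangeEncode (Sum.elim b c) (Sum.elim X Z) (a i) := by
  classical
  exact bijective_iff_has_inverse.2 ⟨_, leftInverse_lagrangeEncode_sumElim hbc hba hcard.le X,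
    leftInverse_lagrangeEncode_sumElim hba hbc hcard.ge X⟩

end KeyExchange

theorem map_uniformOfFintype_of_bijective {A B : Type*} [Fintype A] [Nonempty A] [Fintype B]
    [Nonempty B] {f : A → B} (hf : Bijective f) :
    (PMF.uniformOfFintype A).map f = PMF.uniformOfFintype B := by
  ext y
  obtain ⟨x, rfl⟩ := hf.surjective y
  rw [PMF.map_apply, tsum_eq_single x fun x' hx' => if_neg fun h => hx' (hf.injective h).symm,
    if_pos rfl, PMF.uniformOfFintype_apply, PMF.uniformOfFintype_apply,
    Fintype.card_of_bijective hf]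

section Privacy

variable {F ρ κ : Type*} [Field F] [Fintype ρ] {K T : ℕ} {β : Fin (K + T) → F} {α : ρ → F}

theorem lagrangeEncode_append (hβ : Injective β) (X : Fin K → κ → F) (Z : Fin T → κ → F) :
    lagrangeEncode β (Fin.append X Z) =
      lagrangeEncode (Sum.elim (β ∘ Fin.castAdd T) (β ∘ Fin.natAdd K)) (Sum.elim X Z) := by
  have hnodes : β ∘ finSumFinEquiv = Sum.elim (β ∘ Fin.castAdd T) (β ∘ Fin.natAdd K) :=
    Sum.comp_elim β (Fin.castAdd T) (Fin.natAdd K)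
  have hvalues : Fin.append X Z ∘ finSumFinEquiv = Sum.elim X Z := Fin.append_comp_sumElim
  rw [← lagrangeEncode_comp_equiv hβ finSumFinEquiv, hnodes, hvalues]

theorem bijective_lagrangeEncode_append (hβ : Injective β) (hα : Injective α)
    (hαβ : ∀ i j, α i ≠ β (Fin.castAdd T j)) (hcard : Fintype.card ρ = T) (X : Fin K → κ → F) :
    Bijective fun (Z : Fin T → κ → F) (i : ρ) => lagrangeEncode β (Fin.append X Z) (α i) := by
  have hdata_keys : Injective (Sum.elim (β ∘ Fin.castAdd T) (β ∘ Fin.natAdd K)) := by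
    rw [← Sum.comp_elim]
    exact hβ.comp finSumFinEquiv.injective
  have hdata_view : Injective (Sum.elim (β ∘ Fin.castAdd T) α) :=
    (hβ.comp (Fin.castAdd_injective K T)).sumElim hα fun j i => (hαβ i j).symm
  simp only [lagrangeEncode_append hβ]
  exact bijective_lagrangeEncode_sumElim hdata_keys hdata_view (by simp [hcard]) X

theorem lcc_privacy_general (hβ : Injective β) (hα : Injective α)
    (hαβ : ∀ i j, α i ≠ β (Fin.castAdd T j)) (hcard : Fintype.card ρ = T) (X : Fin K → κ → F) :
    Bijective (fun (Z : Fin T → κ → F) (i : ρ) => lagrangeEncode β (Fin.append X Z) (α i)) ∧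
      ∀ [Fintype F] [Fintype κ] [DecidableEq κ] [DecidableEq ρ],
        PMF.map (fun (Z : Fin T → κ → F) (i : ρ) => lagrangeEncode β (Fin.append X Z) (α i))
          (PMF.uniformOfFintype (Fin T → κ → F)) = PMF.uniformOfFintype (ρ → κ → F) :=
  have hbij := bijective_lagrangeEncode_append hβ hα hαβ hcard X
  ⟨hbij, map_uniformOfFintype_of_bijective hbij⟩

end Privacy

/-- **T-privacy of the Lagrange encoding.**
The dataset `X ∈ (F^M)^K` is padded by keys `Z ∈ (F^M)^T` and encoded via the Lagrange
interpolant `u_{X,Z}` of degree `≤ K+T−1` through distinct nodes `β_1,…,β_{K+T}`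
(`u_{X,Z}(β_j) = X_j`, `u_{X,Z}(β_{K+t}) = Z_t`), worker `i` storing `u_{X,Z}(α_i)`.
For any set `𝒯` of `T` workers and any fixed `X`, the map `Z ↦ (u_{X,Z}(α_i))_{i∈𝒯}` is
a bijection; hence for uniform `Z` the colluders' view is uniform, identically for
every `X`. -/
theorem lcc_privacy (F : Type*) [Field F] [Fintype F] [DecidableEq F]
    (M K T N : ℕ) (hM : 0 < M) (hK : 0 < K) (hT : 0 < T) (hN : 0 < N)
    (β : Fin (K + T) → F) (hβ : Function.Injective β)
    (α : Fin N → F) (hα : Function.Injective α)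
    (hαβ : ∀ (i : Fin N) (j : Fin K), α i ≠ β (Fin.castAdd T j))
    (𝒯 : Finset (Fin N)) (h𝒯 : 𝒯.card = T)
    (X : Fin K → Fin M → F) :
    Function.Bijective (fun (Z : Fin T → Fin M → F) (i : 𝒯) (m : Fin M) =>
      (Lagrange.interpolate Finset.univ β (fun j => Fin.append X Z j m)).eval (α i.1)) ∧
    PMF.map (fun (Z : Fin T → Fin M → F) (i : 𝒯) (m : Fin M) =>
        (Lagrange.interpolate Finset.univ β (fun j => Fin.append X Z j m)).eval (α i.1))
        (PMF.uniformOfFintype (Fin T → Fin M → F)) =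
      PMF.uniformOfFintype (𝒯 → Fin M → F) := by
  obtain ⟨hbij, huniform⟩ := lcc_privacy_general hβ (hα.comp Subtype.val_injective)
    (fun i : 𝒯 => hαβ i) ((Fintype.card_coe 𝒯).trans h𝒯) X
  exact ⟨hbij, huniform⟩
end

section
/- Let F be a field, d ≥ 1, and let V_1, …, V_d and U be F-vector spaces. Let f : V_1 × ⋯ × V_d → U be a nonzero multilinear map, and write V = V_1 × ⋯ × V_d with the componentwise scalar action of F. Let K ≥ 1 and N be positive integers, and let G ∈ F^{K×N} be an encoding matrix; for X = (X_1,…,X_K) ∈ V^K define the coded variables X̃_i = Σ_{j=1}^{K} G_{j,i} X_j for i ∈ {1,…,N}. Suppose the scheme has recovery threshold R, i.e., for every subset 𝒦 ⊆ {1,…,N} with |𝒦| = R there exists a function h_𝒦 : U^𝒦 → U^K such that h_𝒦((f(X̃_i))_{i∈𝒦}) = (f(X_1),…,f(X_K)) for all X ∈ V^K. Then R ≥ min{ (K−1)d + 1, N − ⌊N/K⌋ + 1 }. -/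
/-!
View the columns of `G` as vectors of `F ^ K` and let `e_j` be the standard basis. Suppose that the
columns of a set `S` of workers are covered by the kernels of `d` functionals `φ_l`, none of which
vanishes at `e_j`. Choosing `v` with `f v ≠ 0` and taking the inputs `X_k = (φ_l (e_k) • v_l)_l`,
multilinearity gives `f (∑ c_k • X_k) = (∏ φ_l c) • f v`. So every worker in `S` returns `0`, as it
does on the zero input, although `f (X_j) ≠ 0`; hence `S` has fewer than `R` elements.

A large such `S` is found by removing bases from the set of columns. Each basis has a dual
functional that is nonzero at `e_j` and kills all but one of its members, so one functional covers
`K - 1` of the `K` columns removed. After `d` bases this covers `(K - 1) * d` columns. If the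
remaining columns stop spanning earlier, one more functional kills all of them, and at most
`⌊N / K⌋` columns, one for each basis removed, are left uncovered.
-/

open Module Submodule Finset

theorem exists_subset_basis_of_span_eq_top {F E ι : Type*} [DivisionRing F] [AddCommGroup E]
    [Module F E] {g : ι → E} {T : Finset ι} (hT : span F (g '' T) = ⊤) :
    ∃ B ⊆ T, ∃ b : Basis B F E, ∀ i, b i = g i := by
  obtain ⟨s, hsT, -, hTs, hs⟩ :=
    exists_linearIndepOn_extension (linearIndepOn_empty F g) (Set.empty_subset (T : Set ι))
  lift s to Finset ι using T.finite_toSet.subset hsT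
  have hspan : ⊤ ≤ span F (Set.range fun i : s => g i) := by
    rw [← hT, span_le]
    rwa [Set.image_eq_range g s] at hTs
  exact ⟨s, mod_cast hsT, Basis.mk hs hspan, Basis.mk_apply hs hspan⟩

theorem exists_dual_forall_erase_eq_zero {R M ι : Type*} [CommSemiring R] [AddCommMonoid M]
    [Module R M] [DecidableEq ι] {g : ι → M} {B : Finset ι} (b : Basis B R M)
    (hb : ∀ i, b i = g i) {x : M} (hx : x ≠ 0) :
    ∃ i ∈ B, ∃ φ : Dual R M, φ x ≠ 0 ∧ ∀ k ∈ B.erase i, φ (g k) = 0 := by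
  obtain ⟨i, hi⟩ : ∃ i, b.coord i x ≠ 0 := by
    by_contra! hzero
    exact hx (b.forall_coord_eq_zero_iff.1 hzero)
  refine ⟨i, i.2, b.coord i, hi, fun k hk => ?_⟩
  obtain ⟨hki, hkB⟩ := mem_erase.1 hk
  have hne : (⟨k, hkB⟩ : B) ≠ i := fun h => hki (congrArg Subtype.val h)
  rw [← hb ⟨k, hkB⟩, b.coord_apply, b.repr_self, Finsupp.single_eq_of_ne' hne]

theorem exists_dual_forall_eq_zero_of_span_ne_top {F E ι κ : Type*} [Field F] [AddCommGroup E]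
    [Module F E] {e : κ → E} (he : span F (Set.range e) = ⊤) {g : ι → E} {s : Set ι}
    (hs : span F (g '' s) ≠ ⊤) :
    ∃ (φ : Dual F E) (j : κ), φ (e j) ≠ 0 ∧ ∀ i ∈ s, φ (g i) = 0 := by
  obtain ⟨φ, hφ, hker⟩ := exists_le_ker_of_lt_top _ hs.lt_top
  obtain ⟨j, hj⟩ : ∃ j, φ (e j) ≠ 0 := by
    by_contra! hzero
    exact hφ (LinearMap.ext_on_range he hzero)
  exact ⟨φ, j, hj, fun i hi => hker (subset_span (Set.mem_image_of_mem g hi))⟩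

section HyperplaneCover

variable {F E ι κ : Type*} [Field F] [AddCommGroup E] [Module F E]

variable (F) in
/-- The vectors `g i`, `i ∈ S`, lie in a union of `d` hyperplanes through the origin, none of which
contains `x`. The hyperplanes are given as kernels of functionals, possibly with repetition. -/
def HyperplaneCover (g : ι → E) (x : E) (d : ℕ) (S : Finset ι) : Prop :=
  ∃ φ : Fin d → Dual F E, (∀ l, φ l x ≠ 0) ∧ ∀ i ∈ S, ∃ l, φ l (g i) = 0

variable {g : ι → E} {x : E} {d : ℕ} {S T : Finset ι}

theorem hyperplaneCover_empty_zero : HyperplaneCover F g x 0 ∅ :=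
  ⟨Fin.elim0, fun l => l.elim0, by simp⟩

theorem hyperplaneCover_succ_of_forall_eq_zero {φ : Dual F E} (hφx : φ x ≠ 0)
    (hφ : ∀ i ∈ S, φ (g i) = 0) : HyperplaneCover F g x (d + 1) S :=
  ⟨fun _ => φ, fun _ => hφx, fun i hi => ⟨0, hφ i hi⟩⟩

theorem HyperplaneCover.union [DecidableEq ι] (hS : HyperplaneCover F g x d S) {φ : Dual F E}
    (hφx : φ x ≠ 0) (hφ : ∀ i ∈ T, φ (g i) = 0) : HyperplaneCover F g x (d + 1) (S ∪ T) := by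
  obtain ⟨ψ, hψx, hψ⟩ := hS
  refine ⟨Fin.cons φ ψ, Fin.cases hφx hψx, fun i hi => ?_⟩
  rcases mem_union.1 hi with hiS | hiT
  · obtain ⟨l, hl⟩ := hψ i hiS
    exact ⟨l.succ, hl⟩
  · exact ⟨0, hφ i hiT⟩

theorem HyperplaneCover.exists_union_basis [DecidableEq ι] (hS : HyperplaneCover F g x d S)
    (hx : x ≠ 0) {B : Finset ι} (b : Basis B F E) (hb : ∀ i, b i = g i) (hSB : Disjoint S B) :
    ∃ S' ⊆ S ∪ B, HyperplaneCover F g x (d + 1) S' ∧ #S' = #S + (finrank F E - 1) := by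
  obtain ⟨i, hi, φ, hφx, hφ⟩ := exists_dual_forall_erase_eq_zero b hb hx
  refine ⟨S ∪ B.erase i, union_subset_union_right (erase_subset i B), hS.union hφx hφ, ?_⟩
  rw [card_union_of_disjoint (hSB.mono_right (erase_subset i B)), card_erase_of_mem hi,
    finrank_eq_card_basis b, Fintype.card_coe]

theorem exists_hyperplaneCover_card_ge [Nonempty κ] {e : κ → E} (he : ∀ j, e j ≠ 0)
    (hspan : span F (Set.range e) = ⊤) (g : ι → E) (d : ℕ) (T : Finset ι) :
    ∃ j, ∃ S ⊆ T, HyperplaneCover F g (e j) d S ∧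
      min ((finrank F E - 1) * d) (#T - #T / finrank F E) ≤ #S := by
  classical
  induction d generalizing T with
  | zero => exact ⟨Classical.arbitrary κ, ∅, empty_subset T, hyperplaneCover_empty_zero, by simp⟩
  | succ d ih =>
    by_cases hT : span F (g '' T) = ⊤
    · obtain ⟨B, hBT, b, hb⟩ := exists_subset_basis_of_span_eq_top hT
      obtain ⟨j, S, hST, hS, hcard⟩ := ih (T \ B)
      obtain ⟨S', hS', hcover, hcard'⟩ :=
        hS.exists_union_basis (he j) b hb (disjoint_of_subset_left hST sdiff_disjoint)
      have hS'T : S' ⊆ T := hS'.trans (union_subset (hST.trans sdiff_subset) hBT)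
      have hfinrank : finrank F E = #B := by rw [finrank_eq_card_basis b, Fintype.card_coe]
      have hcardT : #T = #(T \ B) + finrank F E := by
        rw [hfinrank, card_sdiff_add_card_eq_card hBT]
      have : Nontrivial E := ⟨e j, 0, he j⟩
      have : Module.Finite F E := .of_basis b
      have hpos : 0 < finrank F E := finrank_pos
      have hdiv : #T / finrank F E = #(T \ B) / finrank F E + 1 := by
        rw [hcardT, Nat.add_div_right _ hpos]
      refine ⟨j, S', hS'T, hcover, ?_⟩
      rw [hcard', hdiv, mul_add_one]
      omega
    · obtain ⟨φ, j, hφj, hφ⟩ := exists_dual_forall_eq_zero_of_span_ne_top hspan hT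
      exact ⟨j, T, Subset.rfl, hyperplaneCover_succ_of_forall_eq_zero hφj hφ,
        (min_le_right _ _).trans (Nat.sub_le _ _)⟩

end HyperplaneCover

section Decoding

variable {R η κ : Type*} [Fintype κ] [DecidableEq κ]
  {V : η → Type*} {U : Type*} [∀ l, AddCommMonoid (V l)] [AddCommMonoid U]

theorem map_sum_smul_dual_smul [Fintype η] [CommSemiring R] [∀ l, Module R (V l)] [Module R U]
    (f : MultilinearMap R V U) (φ : η → Dual R (κ → R)) (v : ∀ l, V l) (c : κ → R) :
    f (∑ k, c k • fun l => φ l (Pi.single k 1) • v l) = (∏ l, φ l c) • f v := by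
  rw [← f.map_smul_univ]
  congr 1
  ext l
  have hφc : φ l c = ∑ k, c k * φ l (Pi.single k 1) := by
    conv_lhs => rw [pi_eq_sum_univ' c]
    simp
  simp [hφc, sum_smul, smul_smul]

variable {F ι : Type*} [Field F] [∀ l, Module F (V l)] [Module F U]

theorem not_exists_decoder_of_forall_exists_eq_zero [Finite η] [Nonempty η]
    {f : MultilinearMap F V U} (hf : f ≠ 0) (G : Matrix κ ι F) {S : Finset ι} {j : κ}
    (φ : η → Dual F (κ → F))
    (hφj : ∀ l, φ l (Pi.single j 1) ≠ 0) (hφ : ∀ i ∈ S, ∃ l, φ l (G.col i) = 0) :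
    ¬ ∃ h : (S → U) → (κ → U), ∀ X : κ → ∀ l, V l,
      h (fun i => f (∑ k, G k i.1 • X k)) = fun k => f (X k) := by
  have := Fintype.ofFinite η
  rintro ⟨h, hh⟩
  obtain ⟨v, hv⟩ : ∃ v, f v ≠ 0 := by
    by_contra! hzero
    exact hf (MultilinearMap.ext hzero)
  let X : κ → ∀ l, V l := fun k l => φ l (Pi.single k 1) • v l
  have hworkers (i : S) : f (∑ k, G k i.1 • X k) = 0 := by
    obtain ⟨l, hl⟩ := hφ i i.2
    refine (map_sum_smul_dual_smul f φ v (G.col i)).trans ?_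
    rw [prod_eq_zero (mem_univ l) hl, zero_smul]
  have hXj : f (X j) ≠ 0 := by
    rw [f.map_smul_univ]
    exact (IsUnit.mk0 _ (prod_ne_zero_iff.2 fun l _ => hφj l)).smul_eq_zero.not.2 hv
  have hX := hh X
  have hzero := hh 0
  simp only [hworkers] at hX
  simp only [Pi.zero_apply, smul_zero, sum_const_zero, f.map_zero] at hzero
  exact hXj (congrFun (hX.symm.trans hzero) j)

end Decoding

/-- **Lower bound on the recovery threshold for multilinear functions (Lemma 1,
resiliency part).**  Let `f` be a nonzero multilinear map of degree `d` on
`V = V_1 × ⋯ × V_d`, and let a linear encoding scheme assign worker `i` the coded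
variable `X̃_i = Σ_j G_{j,i} • X_j`.  If from every set of `R` workers' results
`(f(X̃_i))` the master can decode `(f(X_1),…,f(X_K))`, then
`R ≥ min{(K−1)d + 1, N − ⌊N/K⌋ + 1}`. -/
theorem recovery_threshold_lower_bound (F : Type*) [Field F] (d K N R : ℕ)
    (hd : 1 ≤ d) (hK : 1 ≤ K) (hN : 0 < N)
    (V : Fin d → Type*) [∀ i, AddCommMonoid (V i)] [∀ i, Module F (V i)]
    (U : Type*) [AddCommMonoid U] [Module F U]
    (f : MultilinearMap F V U) (hf : f ≠ 0)
    (G : Matrix (Fin K) (Fin N) F)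
    (hR : ∀ 𝒦 : Finset (Fin N), 𝒦.card = R →
      ∃ h : (𝒦 → U) → (Fin K → U),
        ∀ X : Fin K → (∀ l, V l),
          h (fun i => f (∑ j : Fin K, G j i.1 • X j)) = fun j => f (X j)) :
    min ((K - 1) * d + 1) (N - N / K + 1) ≤ R := by
  by_contra! hlt
  have : Nonempty (Fin d) := ⟨⟨0, hd⟩⟩
  have : Nonempty (Fin K) := ⟨⟨0, hK⟩⟩
  let e := Pi.basisFun F (Fin K)
  obtain ⟨j, S, -, ⟨φ, hφj, hφ⟩, hcard⟩ :=
    exists_hyperplaneCover_card_ge e.ne_zero e.span_eq G.col d univ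
  rw [finrank_fin_fun, card_univ, Fintype.card_fin] at hcard
  have hRS : R ≤ #S := by omega
  obtain ⟨𝒦, h𝒦S, h𝒦R⟩ := exists_subset_card_eq hRS
  exact not_exists_decoder_of_forall_exists_eq_zero hf G φ (by simpa [e] using hφj)
    (fun i hi => hφ i (h𝒦S hi)) (hR 𝒦 h𝒦R)
end

section
/- Let V and U be sets, f : V → U, and N, K, S, A natural numbers. Let g_1, …, g_N : V^K → V be arbitrary deterministic encoding functions, and suppose the scheme is S-resilient and A-secure: for every subset 𝒦 ⊆ {1,…,N} with |𝒦| ≥ N − S there exists a decoder h_𝒦 : U^𝒦 → U^K such that for every X ∈ V^K and every reported vector ỹ : 𝒦 → U with |{i ∈ 𝒦 : ỹ_i ≠ f(g_i(X))}| ≤ A, one has h_𝒦(ỹ) = (f(X_1),…,f(X_K)). Then the scheme can tolerate S + 2A stragglers: for every subset 𝒦′ ⊆ {1,…,N} with |𝒦′| ≥ N − S − 2A and any X, X′ ∈ V^K with f(g_i(X)) = f(g_i(X′)) for all i ∈ 𝒦′, one has f(X_j) = f(X′_j) for every j ∈ {1,…,K}. -/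
/-!
Adding at most `2A` stragglers to the available workers gives a set of at least `N - S` workers.
On the larger set the two response vectors are at Hamming distance at most `2A`, so some vector is
within distance `A` of both. The decoder must map that vector to the outputs of both datasets.
-/

section HammingDist

variable {ι : Type*} {β : ι → Type*} [∀ i, DecidableEq (β i)]

theorem ncard_setOf_ne_eq_hammingDist [Fintype ι] (x y : ∀ i, β i) :
    {i | x i ≠ y i}.ncard = hammingDist x y := by
  simp [hammingDist, Set.ncard_eq_toFinset_card']

theorem exists_hammingDist_le_of_hammingDist_le_add [Fintype ι] {x y : ∀ i, β i} {a b : ℕ}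
    (hxy : hammingDist x y ≤ a + b) :
    ∃ z : ∀ i, β i, hammingDist z x ≤ a ∧ hammingDist z y ≤ b := by
  classical
  let D : Finset ι := {i | x i ≠ y i}
  have hD : D.card ≤ a + b := hxy
  obtain ⟨E, hED, hE⟩ := Finset.exists_subset_card_eq (min_le_right a D.card)
  have hDE : (D \ E).card = D.card - E.card := Finset.card_sdiff_of_subset hED
  refine ⟨E.piecewise y x, ?_, ?_⟩
  · have hsub : ({i | E.piecewise y x i ≠ x i} : Finset ι) ⊆ E := by
      intro i hi
      by_contra hiE
      simp [hiE] at hi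
    exact (Finset.card_le_card hsub).trans (by omega)
  · have hsub : ({i | E.piecewise y x i ≠ y i} : Finset ι) ⊆ D \ E := by
      intro i hi
      by_cases hiE : i ∈ E <;> simp_all [D]
    exact (Finset.card_le_card hsub).trans (by omega)

theorem hammingDist_restrict_le_card_sdiff [DecidableEq ι] {s t : Finset ι} {x y : ∀ i, β i}
    (hxy : ∀ i ∈ s, x i = y i) :
    hammingDist (t.restrict x) (t.restrict y) ≤ (t \ s).card := by
  refine Finset.card_le_card_of_injOn Subtype.val (fun i hi => ?_) Subtype.val_injective.injOn
  have hne : x i ≠ y i := (Finset.mem_filter.1 hi).2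
  exact Finset.mem_sdiff.2 ⟨i.2, fun his => hne (hxy i his)⟩

end HammingDist

theorem exists_superset_le_card_card_sdiff_le {ι : Type*} [Fintype ι] [DecidableEq ι]
    {s : Finset ι} {n k : ℕ} (hn : n ≤ Fintype.card ι) (hs : n ≤ s.card + k) :
    ∃ t, s ⊆ t ∧ n ≤ t.card ∧ (t \ s).card ≤ k := by
  obtain ⟨t, hst, ht⟩ :=
    Finset.exists_superset_card_eq (le_max_right n s.card) (max_le hn s.card_le_univ)
  have hts : (t \ s).card = t.card - s.card := Finset.card_sdiff_of_subset hst
  exact ⟨t, hst, by omega, by omega⟩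

/-- Secure decodability: one decoder recovers the target value `φ m` from every vector that differs
from the response vector `r m` in at most `A` coordinates. In coded computing `m` is the dataset
`X`, `r X i = f (g i X)` and `φ X j = f (X j)`. -/
def IsSecurelyDecodable {M R ι : Type*} [Fintype ι] {β : ι → Type*} [∀ i, DecidableEq (β i)]
    (r : M → ∀ i, β i) (φ : M → R) (A : ℕ) : Prop :=
  ∃ h : (∀ i, β i) → R, ∀ m y, hammingDist y (r m) ≤ A → h y = φ m

section Decoding

variable {M R ι : Type*} [Fintype ι] {β : ι → Type*} [∀ i, DecidableEq (β i)]
  {r : M → ∀ i, β i} {φ : M → R} {S A : ℕ}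

theorem isSecurelyDecodable_iff_ncard :
    IsSecurelyDecodable r φ A ↔
      ∃ h : (∀ i, β i) → R, ∀ m y, {i | y i ≠ r m i}.ncard ≤ A → h y = φ m := by
  simp only [IsSecurelyDecodable, ncard_setOf_ne_eq_hammingDist]

theorem IsSecurelyDecodable.eq_of_hammingDist_le (hr : IsSecurelyDecodable r φ A) {m m' : M}
    (hm : hammingDist (r m) (r m') ≤ 2 * A) : φ m = φ m' := by
  obtain ⟨h, hh⟩ := hr
  obtain ⟨z, hz, hz'⟩ := exists_hammingDist_le_of_hammingDist_le_add (hm.trans_eq (two_mul A))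
  exact (hh m z hz).symm.trans (hh m' z hz')

theorem resilient_secure_implies_more_stragglers_general
    (hdec : ∀ 𝒦 : Finset ι, Fintype.card ι - S ≤ 𝒦.card →
      IsSecurelyDecodable (fun m => 𝒦.restrict (r m)) φ A)
    {𝒦' : Finset ι} (hcard : Fintype.card ι - S - 2 * A ≤ 𝒦'.card) {m m' : M}
    (hagree : ∀ i ∈ 𝒦', r m i = r m' i) : φ m = φ m' := by
  classical
  obtain ⟨𝒦, -, h𝒦, hdiff⟩ := exists_superset_le_card_card_sdiff_le
    (Nat.sub_le (Fintype.card ι) S) (Nat.sub_le_iff_le_add.1 hcard)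
  exact (hdec 𝒦 h𝒦).eq_of_hammingDist_le
    ((hammingDist_restrict_le_card_sdiff hagree).trans hdiff)

end Decoding

/-- **An (S-resilient, A-secure) scheme tolerates S + 2A stragglers** (the coded
computing analogue of the Hamming bound: correcting `A` errors plus `S` erasures implies
correcting `S + 2A` erasures).  If for every set `𝒦` of at least `N − S` workers there is
a decoder returning `(f(X_1),…,f(X_K))` from any reported vector differing from the true
results `f(g_i(X))` in at most `A` positions, then any two datasets whose results agree
on some set of at least `N − S − 2A` workers have equal outputs `f(X_j)`. -/
theorem resilient_secure_implies_more_stragglers (V U : Type*) (f : V → U)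
    (N K S A : ℕ)
    (g : Fin N → (Fin K → V) → V)
    (hdec : ∀ 𝒦 : Finset (Fin N), N - S ≤ 𝒦.card →
      ∃ h : (𝒦 → U) → (Fin K → U),
        ∀ (X : Fin K → V) (ytil : 𝒦 → U),
          Set.ncard {i : 𝒦 | ytil i ≠ f (g i.1 X)} ≤ A →
          h ytil = fun j => f (X j)) :
    ∀ 𝒦' : Finset (Fin N), N - S - 2 * A ≤ 𝒦'.card →
      ∀ X X' : Fin K → V, (∀ i ∈ 𝒦', f (g i X) = f (g i X')) →
        ∀ j : Fin K, f (X j) = f (X' j) := by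
  classical
  intro 𝒦' hcard X X' hagree
  exact congrFun (resilient_secure_implies_more_stragglers_general (r := fun X i => f (g i X))
    (fun 𝒦 h𝒦 => isSecurelyDecodable_iff_ncard.2 (hdec 𝒦 (by simpa using h𝒦)))
    (by simpa using hcard) hagree)
end

section
/- Let F be a field, d ≥ 1, K ≥ 1, and let W ⊆ F^K be an F-linear subspace of dimension r > 0 such that for every i ∈ {1,…,K} the coordinate functional Γ ↦ Γ_i is not identically zero on W. Consider N workers, where worker i stores a vector (X̃_{i,1}, …, X̃_{i,d}, Γ̃_i) ∈ F^{d+1} and returns the product X̃_{i,1}·⋯·X̃_{i,d}·Γ̃_i. Suppose: (i) for each ℓ ∈ {1,…,d}, the entries (X̃_{i,ℓ})_{i∈[N]} are fixed F-linear combinations of the data entries (X_{j,ℓ})_{j∈[K]} and of independent uniformly random keys, and this encoding is T_X-private with T_X > 0 (for every subset 𝒯 of at most T_X workers, the joint distribution of (X̃_{i,ℓ})_{i∈𝒯} is identical for all values of (X_{j,ℓ})_j); (ii) the entries (Γ̃_i)_{i∈[N]} are fixed F-linear combinations of Γ ∈ W and of independent uniformly random keys, and this encoding is T-private (with no keys used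 when T = 0); (iii) there is a decoding function that recovers (X_{i,1}·⋯·X_{i,d}·Γ_i)_{i∈[K]} from the N returned products, for all data X ∈ (F^d)^K, all Γ ∈ W, and all key realizations. Then N ≥ (T_X + K − 1)d + T + r. -/
/-!
Regard the symbols stored by the workers as functionals on data and keys, column by column. Testing
the decoder on inputs for which every product vanishes shows: however the workers are distributed
among the columns, each wanted coordinate lies, in some column, in the span of the symbols
assigned to that column. Quotienting the span of one column by a subspace `Z` and dropping the
workers and coordinates that become zero leaves a system of the same kind on the other columns.
A bound for the other columns, applied after each such quotient, improves to a bound involving the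
rank of the chosen column: take `Z` maximal among the subspaces containing enough worker symbols;
then the remaining symbols lie on a single line modulo `Z`. Privacy makes that rank exceed the
number of wanted coordinates by the privacy threshold, and one adds the columns one at a time, the
auxiliary column last.
-/

open Finset Module Submodule

section Pigeonhole

theorem exists_card_fiber_mul_lt_card_fiber {ι κ β : Type*} [DecidableEq β] {M : Finset ι}
    {J : Finset κ} {n : ℕ} (φ : ι → β) (ψ : κ → β) (hlt : #J * n < #M) :
    ∃ i ∈ M, #{j ∈ J | ψ j = φ i} * n < #{k ∈ M | φ k = φ i} := by
  have hsum : ∑ b ∈ M.image φ, #{j ∈ J | ψ j = b} * n < ∑ b ∈ M.image φ, #{k ∈ M | φ k = b} := by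
    calc ∑ b ∈ M.image φ, #{j ∈ J | ψ j = b} * n
        = #{j ∈ J | ψ j ∈ M.image φ} * n := by
          rw [← Finset.sum_mul, sum_card_fiberwise_eq_card_filter]
      _ ≤ #J * n := Nat.mul_le_mul_right n (card_filter_le _ _)
      _ < #M := hlt
      _ = ∑ b ∈ M.image φ, #{k ∈ M | φ k = b} := card_eq_sum_card_image φ M
  obtain ⟨b, hb, hbn⟩ := exists_lt_of_sum_lt hsum
  obtain ⟨i, hi, rfl⟩ := mem_image.1 hb
  exact ⟨i, hi, hbn⟩

end Pigeonhole

section Contraction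

variable {F U ι κ : Type*} [Field F] [AddCommGroup U] [Module F U]

theorem sup_span_singleton_eq_iff_mem {Z : Submodule F U} {x y : U} (hx : x ∉ Z) :
    Z ⊔ F ∙ x = Z ⊔ F ∙ y ↔ x ∈ Z ⊔ F ∙ y := by
  constructor
  · intro heq
    exact heq ▸ mem_sup_right (mem_span_singleton_self x)
  · intro hmem
    have hle : Z ⊔ F ∙ x ≤ Z ⊔ F ∙ y :=
      sup_le le_sup_left ((span_singleton_le_iff_mem x _).2 hmem)
    have hwcov : Z ⩿ Z ⊔ F ∙ y := by
      simpa only [sup_comm] using wcovBy_span_singleton_sup y Z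
    refine (hwcov.eq_or_eq le_sup_left hle).resolve_left fun heq ↦ hx ?_
    exact heq ▸ mem_sup_right (mem_span_singleton_self x)

theorem finrank_sup_span_singleton_le (Z : Submodule F U) [FiniteDimensional F Z] (x : U) :
    finrank F ↥(Z ⊔ F ∙ x) ≤ finrank F Z + 1 :=
  (finrank_add_le_finrank_add_finrank Z (F ∙ x)).trans
    (Nat.add_le_add_left (by simpa using finrank_span_le_card ({x} : Set U)) _)

open scoped Classical in
theorem filter_sup_span_singleton_eq {α : Type*} (S : Finset α) (f : α → U) (Z : Submodule F U)
    (y : U) :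
    {s ∈ S | f s ∉ Z}.filter (fun s ↦ Z ⊔ F ∙ f s = Z ⊔ F ∙ y) =
      {s ∈ S | f s ∉ Z ∧ f s ∈ Z ⊔ F ∙ y} := by
  rw [filter_filter]
  exact filter_congr fun s _ ↦ and_congr_right fun hs ↦ sup_span_singleton_eq_iff_mem hs

open scoped Classical in
theorem card_filter_mem_eq_add {α : Type*} {Z Z' : Submodule F U} (hle : Z ≤ Z') (S : Finset α)
    (f : α → U) :
    #{s ∈ S | f s ∈ Z'} = #{s ∈ S | f s ∈ Z} + #{s ∈ S | f s ∉ Z ∧ f s ∈ Z'} := by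
  have hinter : ∀ s, f s ∈ Z' ∧ f s ∈ Z ↔ f s ∈ Z := fun s ↦ and_iff_right_of_imp (@hle (f s))
  rw [← card_filter_add_card_filter_not (s := {s ∈ S | f s ∈ Z'}) (fun s ↦ f s ∈ Z)]
  simp only [filter_filter, hinter, and_comm]

open scoped Classical in
/-- The subspace `Z` is *heavy* for the workers `M` and the targets `J` if it misses some target
vector `w j` and contains at least `n` worker vectors `g i` for each target vector it contains, plus
one for each of its dimensions. Heavy subspaces can be factored out without weakening a bound of the
form `#J * n + a + rank ≤ #M`. -/
def IsHeavy (g : ι → U) (w : κ → U) (M : Finset ι) (J : Finset κ) (n : ℕ)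
    (Z : Submodule F U) : Prop :=
  (∃ j ∈ J, w j ∉ Z) ∧ #{j ∈ J | w j ∈ Z} * n + finrank F Z ≤ #{i ∈ M | g i ∈ Z}

variable {g : ι → U} {w : κ → U} {M : Finset ι} {J : Finset κ} {n a : ℕ}

theorem isHeavy_bot (hJ : J.Nonempty) (hw : ∀ j ∈ J, w j ≠ 0) :
    IsHeavy g w M J n (⊥ : Submodule F U) := by
  classical
  obtain ⟨j, hj⟩ := hJ
  have hempty : {j ∈ J | w j = 0} = ∅ := filter_eq_empty_iff.2 fun j hj ↦ hw j hj
  refine ⟨⟨j, hj, fun hmem ↦ hw j hj ((mem_bot F).1 hmem)⟩, ?_⟩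
  simp [hempty]

theorem exists_maximal_isHeavy_span (hJ : J.Nonempty) (hw : ∀ j ∈ J, w j ≠ 0) :
    ∃ B : Finset ι, IsHeavy g w M J n (span F (g '' B)) ∧
      ∀ i ∈ M, g i ∉ span F (g '' B) → ¬ IsHeavy g w M J n (span F (g '' B) ⊔ F ∙ g i) := by
  classical
  have hempty : IsHeavy g w M J n (span F (g '' (∅ : Finset ι))) := by
    simpa using isHeavy_bot (F := F) hJ hw
  obtain ⟨B, -, hB⟩ := exists_le_maximal
    (M.powerset.filter fun B : Finset ι ↦ IsHeavy g w M J n (span F (g '' B)))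
    (mem_filter.2 ⟨empty_mem_powerset M, hempty⟩)
  obtain ⟨hBM, hheavy⟩ := mem_filter.1 hB.prop
  refine ⟨B, hheavy, fun i hi hiB hinsert ↦ hiB ?_⟩
  have hspan : span F (g '' (insert i B : Finset ι)) = span F (g '' B) ⊔ F ∙ g i := by
    rw [coe_insert, Set.image_insert_eq, span_insert, sup_comm]
  have hle : insert i B ≤ B := hB.le_of_ge
    (mem_filter.2 ⟨mem_powerset.2 (insert_subset hi (mem_powerset.1 hBM)), hspan ▸ hinsert⟩)
    (subset_insert i B)
  exact subset_span (Set.mem_image_of_mem g (hle (mem_insert_self i B)))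

open scoped Classical in
theorem IsHeavy.card_le_of_not_isHeavy_sup {Z : Submodule F U} [FiniteDimensional F Z] {x : U}
    (hZ : IsHeavy g w M J n Z) (hx : ¬ IsHeavy g w M J n (Z ⊔ F ∙ x))
    (hmiss : ∃ j ∈ J, w j ∉ Z ⊔ F ∙ x) :
    #{i ∈ M | g i ∉ Z ∧ g i ∈ Z ⊔ F ∙ x} ≤ #{j ∈ J | w j ∉ Z ∧ w j ∈ Z ⊔ F ∙ x} * n := by
  have hlt : #{i ∈ M | g i ∈ Z ⊔ F ∙ x} <
      #{j ∈ J | w j ∈ Z ⊔ F ∙ x} * n + finrank F ↥(Z ⊔ F ∙ x) :=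
    not_le.1 fun hle ↦ hx ⟨hmiss, hle⟩
  have hrank : finrank F ↥(Z ⊔ F ∙ x) ≤ finrank F Z + 1 := finrank_sup_span_singleton_le Z x
  have hZ_card := hZ.2
  rw [card_filter_mem_eq_add le_sup_left M g, card_filter_mem_eq_add le_sup_left J w,
    add_mul] at hlt
  lia

open scoped Classical in
theorem exists_forall_mem_sup_span_singleton {Z : Submodule F U} (hmiss : ∃ j ∈ J, w j ∉ Z)
    (hlt : #{j ∈ J | w j ∉ Z} * n < #{i ∈ M | g i ∉ Z})
    (hline : ∀ i ∈ M, g i ∉ Z → (∃ j ∈ J, w j ∉ Z ⊔ F ∙ g i) →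
      #{k ∈ M | g k ∉ Z ∧ g k ∈ Z ⊔ F ∙ g i} ≤ #{j ∈ J | w j ∉ Z ∧ w j ∈ Z ⊔ F ∙ g i} * n) :
    ∃ i, ∀ k ∈ M, g k ∈ Z ⊔ F ∙ g i := by
  obtain ⟨i, hi, hfiber⟩ := exists_card_fiber_mul_lt_card_fiber
    (fun i ↦ Z ⊔ F ∙ g i) (fun j ↦ Z ⊔ F ∙ w j) hlt
  obtain ⟨hiM, hiZ⟩ := mem_filter.1 hi
  have hall : ∀ j ∈ J, w j ∈ Z ⊔ F ∙ g i := by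
    by_contra! hmiss_line
    refine (hline i hiM hiZ hmiss_line).not_gt ?_
    rwa [filter_sup_span_singleton_eq, filter_sup_span_singleton_eq] at hfiber
  have hmeet : ∀ k ∈ M, g k ∉ Z → ∃ j ∈ J, w j ∉ Z ∧ w j ∈ Z ⊔ F ∙ g k := by
    intro k hk hkZ
    by_contra! hnone
    obtain ⟨j₀, hj₀, hj₀Z⟩ := hmiss
    have hempty : {j ∈ J | w j ∉ Z ∧ w j ∈ Z ⊔ F ∙ g k} = ∅ :=
      filter_eq_empty_iff.2 fun j hj hjk ↦ hnone j hj hjk.1 hjk.2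
    have hle := hline k hk hkZ ⟨j₀, hj₀, hnone j₀ hj₀ hj₀Z⟩
    rw [hempty, card_empty, zero_mul, nonpos_iff_eq_zero, card_eq_zero, filter_eq_empty_iff] at hle
    exact hle hk ⟨hkZ, mem_sup_right (mem_span_singleton_self _)⟩
  refine ⟨i, fun k hk ↦ ?_⟩
  by_cases hkZ : g k ∈ Z
  · exact mem_sup_left hkZ
  obtain ⟨j, hj, hjZ, hjk⟩ := hmeet k hk hkZ
  rw [← sup_span_singleton_eq_iff_mem hkZ, ← (sup_span_singleton_eq_iff_mem hjZ).2 hjk,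
    (sup_span_singleton_eq_iff_mem hjZ).2 (hall j hj)]

open scoped Classical in
theorem card_mul_add_finrank_span_le_card (hJ : J.Nonempty) (hw : ∀ j ∈ J, w j ≠ 0)
    (hquot : ∀ Z : Submodule F U, (∃ j ∈ J, w j ∉ Z) →
      #{j ∈ J | w j ∉ Z} * n + a + 1 ≤ #{i ∈ M | g i ∉ Z}) :
    #J * n + a + finrank F (span F (g '' M)) ≤ #M := by
  obtain ⟨B, hheavy, hmax⟩ := exists_maximal_isHeavy_span (F := F) (g := g) (M := M) (n := n)
    hJ hw
  set Z := span F (g '' B)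
  have hfin : FiniteDimensional F Z := .span_of_finite F (B.finite_toSet.image g)
  have hrest := hquot Z hheavy.1
  obtain ⟨i, hline⟩ := exists_forall_mem_sup_span_singleton (n := n) hheavy.1 (by lia)
    fun i hi hiZ hmiss ↦ hheavy.card_le_of_not_isHeavy_sup (hmax i hi hiZ) hmiss
  have hrank : finrank F (span F (g '' M)) ≤ finrank F Z + 1 := by
    refine (finrank_mono ?_).trans (finrank_sup_span_singleton_le Z (g i))
    exact span_le.2 (Set.image_subset_iff.2 hline)
  have hJcard := card_filter_add_card_filter_not (s := J) (fun j ↦ w j ∈ Z)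
  have hMcard := card_filter_add_card_filter_not (s := M) (fun i ↦ g i ∈ Z)
  have hZ := hheavy.2
  rw [← hJcard, ← hMcard, add_mul]
  lia

end Contraction

section SmallSpans

variable {F V ι : Type*} [Field F] [AddCommGroup V] [Module F V]

/-- Any `t` of the vectors `c i` span a subspace meeting `E` trivially. For the symbols of a linear
encoding and the space `E` of functionals of the data, this is `t`-privacy. -/
def SmallSpansDisjoint (c : ι → V) (E : Submodule F V) (t : ℕ) : Prop :=
  ∀ A : Finset ι, #A ≤ t → Disjoint (span F (c '' A)) E

variable {c : ι → V} {E E' : Submodule F V} {t : ℕ}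

theorem SmallSpansDisjoint.mono (h : SmallSpansDisjoint c E t) (hle : E' ≤ E) :
    SmallSpansDisjoint c E' t :=
  fun A hA ↦ (h A hA).mono_right hle

theorem exists_linearIndepOn_span_image_eq (c : ι → V) (M : Finset ι) :
    ∃ B ⊆ M, LinearIndepOn F c (B : Set ι) ∧ span F (c '' B) = span F (c '' M) := by
  obtain ⟨B, hBM, -, hMB, hB⟩ :=
    exists_linearIndepOn_extension (linearIndepOn_empty F c) (Set.empty_subset (M : Set ι))
  lift B to Finset ι using M.finite_toSet.subset hBM
  exact ⟨B, mod_cast hBM, hB, le_antisymm (span_mono (Set.image_mono hBM)) (span_le.2 hMB)⟩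

theorem finrank_span_image_eq_card {B : Finset ι} (hB : LinearIndepOn F c (B : Set ι)) :
    finrank F (span F (c '' B)) = #B := by
  rw [Set.image_eq_range]
  exact (finrank_span_eq_card hB).trans (Fintype.card_coe B)

theorem SmallSpansDisjoint.finrank_add_le {M : Finset ι} (h : SmallSpansDisjoint c E t)
    (hE : E ≠ ⊥) (hle : E ≤ span F (c '' M)) :
    finrank F E + t ≤ finrank F (span F (c '' M)) := by
  obtain ⟨B, hBM, hB, hspan⟩ := exists_linearIndepOn_span_image_eq (F := F) c M
  have hcard : t ≤ #B := by
    by_contra! hlt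
    exact hE ((h B hlt.le).eq_bot_of_ge (hspan ▸ hle))
  obtain ⟨A, hAB, hA⟩ := exists_subset_card_eq hcard
  have hfinM : FiniteDimensional F (span F (c '' M)) := .span_of_finite F (M.finite_toSet.image c)
  have hfinA : FiniteDimensional F (span F (c '' A)) := .span_of_finite F (A.finite_toSet.image c)
  have hfinE : FiniteDimensional F E := .of_injective (inclusion hle) (inclusion_injective hle)
  calc finrank F E + t = finrank F (span F (c '' A)) + finrank F E := by
        rw [finrank_span_image_eq_card (hB.mono (mod_cast hAB)), hA, add_comm]
    _ = finrank F ↥(span F (c '' A) ⊔ E) := by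
        rw [← finrank_sup_add_finrank_inf_eq, (h A hA.le).eq_bot, finrank_bot, add_zero]
    _ ≤ finrank F (span F (c '' M)) :=
        finrank_mono (sup_le (span_mono (Set.image_mono (mod_cast hAB.trans hBM))) hle)

open scoped Classical in
theorem card_mul_add_finrank_add_le_card {κ : Type*} {g : ι → V} {w : κ → V} {M : Finset ι}
    {J : Finset κ} {n a : ℕ} (hJ : J.Nonempty) (hw : ∀ j ∈ J, w j ≠ 0)
    (hquot : ∀ Z : Submodule F V, (∃ j ∈ J, w j ∉ Z) →
      #{j ∈ J | w j ∉ Z} * n + a + 1 ≤ #{i ∈ M | g i ∉ Z})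
    (hpriv : SmallSpansDisjoint g (span F (w '' J)) t) :
    #J * n + a + (finrank F (span F (w '' J)) + t) ≤ #M := by
  have hspan : span F (w '' J) ≤ span F (g '' M) := by
    rw [span_le, Set.image_subset_iff]
    intro j hj
    by_contra hjZ
    have hrest := hquot (span F (g '' M)) ⟨j, hj, hjZ⟩
    have hempty : {i ∈ M | g i ∉ span F (g '' M)} = ∅ :=
      filter_eq_empty_iff.2 fun i hi hiZ ↦ hiZ (subset_span (Set.mem_image_of_mem g hi))
    rw [hempty] at hrest
    exact Nat.not_succ_le_zero _ hrest
  have hne : span F (w '' J) ≠ ⊥ := by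
    obtain ⟨j, hj⟩ := hJ
    exact fun hbot ↦ hw j hj (span_eq_bot.1 hbot _ (Set.mem_image_of_mem w hj))
  calc #J * n + a + (finrank F (span F (w '' J)) + t)
      ≤ #J * n + a + finrank F (span F (g '' M)) :=
        Nat.add_le_add_left (hpriv.finrank_add_le hne hspan) _
    _ ≤ #M := card_mul_add_finrank_span_le_card hJ hw hquot

end SmallSpans

section Covering

variable {F ι κ Λ : Type*} [Field F] {V : Λ → Type*} [∀ ℓ, AddCommGroup (V ℓ)]
  [∀ ℓ, Module F (V ℓ)]

/-- Whenever sets `S ℓ`, one for each column `ℓ ∈ L`, cover the workers in `M`, each target `j ∈ J`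
is spanned, in some column `ℓ ∈ L`, by the workers in `S ℓ`. This is what decodability of products
amounts to when the workers in `S ℓ` have their `ℓ`-th factor made zero. -/
def CoveringSpans (c : ∀ ℓ, ι → V ℓ) (e : ∀ ℓ, κ → V ℓ) (L : Finset Λ) (M : Finset ι)
    (J : Finset κ) : Prop :=
  ∀ S : Λ → Set ι, (∀ i ∈ M, ∃ ℓ ∈ L, i ∈ S ℓ) → ∀ j ∈ J, ∃ ℓ ∈ L, e ℓ j ∈ span F (c ℓ '' S ℓ)

variable {c : ∀ ℓ, ι → V ℓ} {e : ∀ ℓ, κ → V ℓ} {L : Finset Λ} {M : Finset ι} {J : Finset κ}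

open scoped Classical in
theorem CoveringSpans.contract {s : Λ} (h : CoveringSpans (F := F) c e (insert s L) M J)
    (hs : s ∉ L) (Z : Submodule F (V s)) :
    CoveringSpans (F := F) c e L {i ∈ M | c s i ∉ Z} {j ∈ J | e s j ∉ Z} := by
  intro S hS j hj
  obtain ⟨hjJ, hjZ⟩ := mem_filter.1 hj
  have hne : ∀ ℓ ∈ L, ℓ ≠ s := fun ℓ hℓ ↦ ne_of_mem_of_not_mem hℓ hs
  have hcover : ∀ i ∈ M, ∃ ℓ ∈ insert s L, i ∈ Function.update S s {i | c s i ∈ Z} ℓ := by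
    intro i hi
    by_cases hiZ : c s i ∈ Z
    · exact ⟨s, mem_insert_self s L, by rwa [Function.update_self]⟩
    · obtain ⟨ℓ, hℓ, hiS⟩ := hS i (mem_filter.2 ⟨hi, hiZ⟩)
      exact ⟨ℓ, mem_insert_of_mem hℓ, by rwa [Function.update_of_ne (hne ℓ hℓ)]⟩
  obtain ⟨ℓ, hℓ, hmem⟩ := h _ hcover j hjJ
  rcases mem_insert.1 hℓ with rfl | hℓL
  · rw [Function.update_self] at hmem
    exact absurd (span_le.2 (Set.image_subset_iff.2 fun i hi ↦ hi) hmem) hjZ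
  · rw [Function.update_of_ne (hne ℓ hℓL)] at hmem
    exact ⟨ℓ, hℓL, hmem⟩

theorem CoveringSpans.nonempty (h : CoveringSpans (F := F) c e ∅ M J) (hJ : J.Nonempty) :
    M.Nonempty := by
  by_contra! hM
  obtain ⟨j, hj⟩ := hJ
  obtain ⟨ℓ, hℓ, -⟩ := h (fun _ ↦ ∅) (by simp [hM]) j hj
  exact notMem_empty ℓ hℓ

theorem CoveringSpans.card_mul_add_one_le {t : ℕ} (he : ∀ ℓ, LinearIndependent F (e ℓ))
    (hpriv : ∀ ℓ, SmallSpansDisjoint (c ℓ) (span F (Set.range (e ℓ))) (t + 1))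
    (h : CoveringSpans (F := F) c e L M J) (hJ : J.Nonempty) :
    #J * #L + t * #L + 1 ≤ #M := by
  classical
  induction L using Finset.induction_on generalizing M J with
  | empty => simpa using (h.nonempty hJ).card_pos
  | insert s L hs ih =>
    have hquot : ∀ Z : Submodule F (V s), (∃ j ∈ J, e s j ∉ Z) →
        #{j ∈ J | e s j ∉ Z} * #L + t * #L + 1 ≤ #{i ∈ M | c s i ∉ Z} :=
      fun Z hmiss ↦ ih (h.contract hs Z) (filter_nonempty_iff.2 hmiss)
    have hcolumn := card_mul_add_finrank_add_le_card hJ (fun j _ ↦ (he s).ne_zero j) hquot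
      ((hpriv s).mono (span_mono (Set.image_subset_range _ _)))
    rw [finrank_span_image_eq_card ((he s).linearIndepOn _)] at hcolumn
    rw [card_insert_of_notMem hs]
    linarith

end Covering

section Decoder

variable {F ι κ Λ : Type*} [Field F]

theorem exists_forall_apply_eq_zero_of_notMem_span {P : Type*} [AddCommGroup P] [Module F P]
    {c : ι → Dual F P} {S : Set ι} (hS : S.Finite) {u : Dual F P} (hu : u ∉ span F (c '' S)) :
    ∃ p, (∀ i ∈ S, c i p = 0) ∧ u p ≠ 0 := by
  have := hS.to_subtype
  by_contra! hzero
  refine hu (Set.image_eq_range c S ▸ mem_span_of_iInf_ker_le_ker fun p hp ↦ hzero p ?_)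
  simpa using hp

variable [Fintype ι] [Fintype κ] [Fintype Λ] {P : Λ → Type*} {Q : Type*}
  [∀ ℓ, AddCommGroup (P ℓ)] [∀ ℓ, Module F (P ℓ)] [AddCommGroup Q] [Module F Q]
  {c : ∀ ℓ, ι → Dual F (P ℓ)} {e : ∀ ℓ, κ → Dual F (P ℓ)} {g : ι → Dual F Q} {w : κ → Dual F Q}
  {h : (ι → F) → κ → F}

open scoped Classical in
theorem coveringSpans_of_decoder
    (hdec : ∀ (p : ∀ ℓ, P ℓ) (q : Q),
      h (fun i ↦ (∏ ℓ, c ℓ i (p ℓ)) * g i q) = fun j ↦ (∏ ℓ, e ℓ j (p ℓ)) * w j q)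
    (Z : Submodule F (Dual F Q)) :
    CoveringSpans (F := F) c e univ {i | g i ∉ Z} {j | w j ∉ Z} := by
  intro S hS j hj
  by_contra! hnot
  have hjZ : w j ∉ span F (g '' {i | g i ∈ Z}) := fun hmem ↦
    (mem_filter.1 hj).2 (span_le.2 (Set.image_subset_iff.2 fun i hi ↦ hi) hmem)
  obtain ⟨q, hgq, hwq⟩ := exists_forall_apply_eq_zero_of_notMem_span (Set.toFinite _) hjZ
  choose p hcp hep using fun ℓ ↦
    exists_forall_apply_eq_zero_of_notMem_span (Set.toFinite _) (hnot ℓ (mem_univ ℓ))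
  have hproducts : (fun i ↦ (∏ ℓ, c ℓ i (p ℓ)) * g i q) = fun i ↦ (∏ ℓ, c ℓ i (p ℓ)) * g i 0 := by
    funext i
    rw [map_zero, mul_zero]
    by_cases hiZ : g i ∈ Z
    · rw [hgq i hiZ, mul_zero]
    · obtain ⟨ℓ, hℓ, hiS⟩ := hS i (mem_filter.2 ⟨mem_univ i, hiZ⟩)
      rw [prod_eq_zero hℓ (hcp ℓ i hiS), zero_mul]
  have hzero : (∏ ℓ, e ℓ j (p ℓ)) * w j q = 0 := by
    have hdecoded := congrFun ((hdec p q).symm.trans ((congrArg h hproducts).trans (hdec p 0))) j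
    simpa only [map_zero, mul_zero] using hdecoded
  exact mul_ne_zero (prod_ne_zero_iff.2 fun ℓ _ ↦ hep ℓ) hwq hzero

theorem card_mul_add_finrank_add_le_card_of_decoder [Nonempty κ] {t T : ℕ}
    (he : ∀ ℓ, LinearIndependent F (e ℓ)) (hw : ∀ j, w j ≠ 0)
    (hpriv : ∀ ℓ, SmallSpansDisjoint (c ℓ) (span F (Set.range (e ℓ))) (t + 1))
    (hprivΓ : SmallSpansDisjoint g (span F (Set.range w)) T)
    (hdec : ∀ (p : ∀ ℓ, P ℓ) (q : Q),
      h (fun i ↦ (∏ ℓ, c ℓ i (p ℓ)) * g i q) = fun j ↦ (∏ ℓ, e ℓ j (p ℓ)) * w j q) :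
    (t + Fintype.card κ) * Fintype.card Λ + T + finrank F (span F (Set.range w)) ≤
      Fintype.card ι := by
  classical
  have himage : w '' (univ : Finset κ) = Set.range w := by rw [coe_univ, Set.image_univ]
  have hbound := card_mul_add_finrank_add_le_card (M := univ) univ_nonempty (fun j _ ↦ hw j)
    (fun Z hmiss ↦ (coveringSpans_of_decoder hdec Z).card_mul_add_one_le he hpriv
      (filter_nonempty_iff.2 hmiss))
    (himage.symm ▸ hprivΓ)
  rw [himage, card_univ, card_univ, card_univ] at hbound
  linarith

end Decoder

section Encoding

variable {F A Z ι κ : Type*} [Field F] [AddCommGroup A] [Module F A] [AddCommGroup Z] [Module F Z]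

/-- The symbol `φ x i + ψ z i` of worker `i` in the linear encoding of the data `x` with keys `z`,
as a functional of `(x, z)`. -/
def symbol (φ : A →ₗ[F] ι → F) (ψ : Z →ₗ[F] ι → F) (i : ι) : Dual F (A × Z) :=
  LinearMap.proj i ∘ₗ φ.coprod ψ

variable (A Z) in
/-- A functional of the data regarded as a functional of data and keys. -/
def dataFunctional : Dual F A →ₗ[F] Dual F (A × Z) :=
  (LinearMap.fst F A Z).dualMap

/-- The set of possible joint views of any `T` workers, as the keys vary, is the same for all
data. Equality of the view distributions under uniform keys implies this, and this form makes sense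
over an infinite field. -/
def IsPrivateEncoding (φ : A →ₗ[F] ι → F) (ψ : Z →ₗ[F] ι → F) (T : ℕ) : Prop :=
  ∀ 𝒯 : Finset ι, #𝒯 ≤ T → ∀ x x' : A,
    Set.range (fun z ↦ 𝒯.restrict (φ x + ψ z)) = Set.range (fun z ↦ 𝒯.restrict (φ x' + ψ z))

theorem IsPrivateEncoding.smallSpansDisjoint {φ : A →ₗ[F] ι → F} {ψ : Z →ₗ[F] ι → F} {T : ℕ}
    (h : IsPrivateEncoding φ ψ T) :
    SmallSpansDisjoint (symbol φ ψ) (LinearMap.range (dataFunctional A Z)) T := by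
  intro 𝒯 h𝒯
  rw [disjoint_def]
  rintro _ hspan ⟨u, rfl⟩
  refine LinearMap.ext fun ⟨x, z⟩ ↦ ?_
  obtain ⟨z', hview⟩ : (0 : 𝒯 → F) ∈ Set.range (fun z ↦ 𝒯.restrict (φ x + ψ z)) := by
    rw [h 𝒯 h𝒯 x 0]
    exact ⟨0, by ext; simp⟩
  have hle : span F (symbol φ ψ '' 𝒯) ≤ LinearMap.ker (Dual.eval F (A × Z) (x, z')) :=
    span_le.2 (Set.image_subset_iff.2 fun i hi ↦ congrFun hview ⟨i, hi⟩)
  exact hle hspan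

theorem span_range_dataFunctional_comp_le (u : κ → Dual F A) :
    span F (Set.range fun j ↦ dataFunctional A Z (u j)) ≤ LinearMap.range (dataFunctional A Z) :=
  span_le.2 (Set.range_subset_iff.2 fun j ↦ LinearMap.mem_range_self _ (u j))

theorem dataFunctional_injective :
    Function.Injective (dataFunctional A Z : Dual F A →ₗ[F] Dual F (A × Z)) :=
  LinearMap.dualMap_injective_of_surjective Prod.fst_surjective

theorem linearIndependent_dataFunctional_comp {u : κ → Dual F A} (hu : LinearIndependent F u) :
    LinearIndependent F fun j ↦ dataFunctional A Z (u j) :=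
  hu.map' _ (LinearMap.ker_eq_bot.2 dataFunctional_injective)

theorem linearIndependent_proj [Finite κ] :
    LinearIndependent F (LinearMap.proj : κ → Dual F (κ → F)) := by
  have := Fintype.ofFinite κ
  classical
  rw [Fintype.linearIndependent_iff]
  intro a ha j
  simpa [Pi.single_apply] using LinearMap.congr_fun ha (Pi.single j 1)

theorem span_range_proj_comp_subtype [Finite κ] (W : Submodule F (κ → F)) :
    span F (Set.range fun j ↦ LinearMap.proj j ∘ₗ W.subtype) = (⊤ : Submodule F (Dual F W)) := by
  refine eq_top_iff.2 fun u _ ↦ mem_span_of_iInf_ker_le_ker fun γ hγ ↦ ?_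
  have hzero : γ = 0 := by
    ext j
    exact (mem_iInf _).1 hγ j
  simp [hzero]

theorem dataFunctional_proj_comp_subtype_ne_zero {W : Submodule F (κ → F)} {j : κ}
    (hW : ∃ γ ∈ W, γ j ≠ 0) :
    dataFunctional W Z (LinearMap.proj j ∘ₗ W.subtype) ≠ 0 := by
  obtain ⟨γ, hγ, hne⟩ := hW
  exact fun hzero ↦ hne (LinearMap.congr_fun hzero (⟨γ, hγ⟩, 0))

theorem finrank_span_dataFunctional_proj [Finite κ] (W : Submodule F (κ → F)) :
    finrank F (span F (Set.range fun j ↦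
      dataFunctional W Z (LinearMap.proj j ∘ₗ W.subtype))) = finrank F W := by
  rw [Set.range_comp', ← map_span, span_range_proj_comp_subtype, Submodule.map_top,
    LinearMap.finrank_range_of_inj dataFunctional_injective, Subspace.dual_finrank_eq]

theorem range_eq_of_map_uniformOfFintype_eq {α β : Type*} [Fintype α] [Nonempty α] {f f' : α → β}
    (h : (PMF.uniformOfFintype α).map f = (PMF.uniformOfFintype α).map f') :
    Set.range f = Set.range f' := by
  simpa using congrArg PMF.support h

end Encoding

theorem strong_private_lower_bound_general {F ι κ Λ : Type*} [Field F] [Fintype ι] [Fintype κ]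
    [Nonempty κ] [Fintype Λ] {T T_X : ℕ} (hTX : 0 < T_X) (W : Submodule F (κ → F))
    (hW : ∀ j, ∃ γ ∈ W, γ j ≠ 0) {Z : Λ → Type*} [∀ ℓ, AddCommGroup (Z ℓ)] [∀ ℓ, Module F (Z ℓ)]
    {ZΓ : Type*} [AddCommGroup ZΓ] [Module F ZΓ]
    (φ : Λ → (κ → F) →ₗ[F] ι → F) (ψ : ∀ ℓ, Z ℓ →ₗ[F] ι → F)
    (φΓ : W →ₗ[F] ι → F) (ψΓ : ZΓ →ₗ[F] ι → F)
    (hprivX : ∀ ℓ, IsPrivateEncoding (φ ℓ) (ψ ℓ) T_X) (hprivΓ : IsPrivateEncoding φΓ ψΓ T)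
    (hdec : ∃ h : (ι → F) → κ → F, ∀ (X : κ → Λ → F) (Γ : W) (z : ∀ ℓ, Z ℓ) (zΓ : ZΓ),
      h (fun i ↦ (∏ ℓ, (φ ℓ (fun j ↦ X j ℓ) i + ψ ℓ (z ℓ) i)) * (φΓ Γ i + ψΓ zΓ i)) =
        fun j ↦ (∏ ℓ, X j ℓ) * Γ.1 j) :
    (T_X + Fintype.card κ - 1) * Fintype.card Λ + T + finrank F W ≤ Fintype.card ι := by
  obtain ⟨t, rfl⟩ := Nat.exists_eq_add_one_of_ne_zero hTX.ne'
  obtain ⟨h, hdec⟩ := hdec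
  let u : κ → Dual F (κ → F) := fun j ↦ LinearMap.proj j
  let w : κ → Dual F W := fun j ↦ LinearMap.proj j ∘ₗ W.subtype
  have hbound := card_mul_add_finrank_add_le_card_of_decoder (h := h)
    (c := fun ℓ ↦ symbol (φ ℓ) (ψ ℓ)) (e := fun ℓ j ↦ dataFunctional (κ → F) (Z ℓ) (u j))
    (g := symbol φΓ ψΓ) (w := fun j ↦ dataFunctional W ZΓ (w j))
    (fun ℓ ↦ linearIndependent_dataFunctional_comp linearIndependent_proj)
    (fun j ↦ dataFunctional_proj_comp_subtype_ne_zero (hW j))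
    (fun ℓ ↦ (hprivX ℓ).smallSpansDisjoint.mono (span_range_dataFunctional_comp_le u))
    (hprivΓ.smallSpansDisjoint.mono (span_range_dataFunctional_comp_le w))
    (fun p q ↦ hdec (fun j ℓ ↦ (p ℓ).1 j) q.1 (fun ℓ ↦ (p ℓ).2) q.2)
  rw [finrank_span_dataFunctional_proj] at hbound
  rwa [add_right_comm t, Nat.add_sub_cancel]

/-- **Lemma 2 (strong worker lower bound for private scalar-product computation).**
Worker `i` stores `(X̃_{i,1},…,X̃_{i,d},Γ̃_i) ∈ F^{d+1}` and returns the product of its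
entries.  Each entry column `(X̃_{i,ℓ})_i` is a fixed linear encoding (with independent
uniform keys) of the data column `(X_{j,ℓ})_j`, and is `T_X`-private with `T_X > 0`;
the column `(Γ̃_i)_i` is a fixed linear encoding (with independent uniform keys) of
`Γ`, ranging over an `r`-dimensional subspace `W ⊆ F^K` on which no coordinate
functional vanishes identically, and is `T`-private (no keys when `T = 0`).  If the
master can decode `(∏_ℓ X_{j,ℓ}) · Γ_j` for all `j` from the `N` products, for all data,
all `Γ ∈ W`, and all key realizations, then `N ≥ (T_X + K − 1)d + T + r`. -/
theorem strong_private_lower_bound (F : Type*) [Field F] [Fintype F]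
    (d K N T T_X r : ℕ) (hd : 1 ≤ d) (hK : 1 ≤ K) (hTX : 0 < T_X)
    (W : Submodule F (Fin K → F)) (hr : Module.finrank F W = r) (hrpos : 0 < r)
    (hW : ∀ i : Fin K, ∃ γ ∈ W, γ i ≠ 0)
    (v : Fin d → ℕ) (vG : ℕ)
    (G : (ℓ : Fin d) → Matrix (Fin K) (Fin N) F)
    (H : (ℓ : Fin d) → Matrix (Fin (v ℓ)) (Fin N) F)
    (C : Matrix (Fin K) (Fin N) F) (D : Matrix (Fin vG) (Fin N) F)
    (hprivX : ∀ ℓ : Fin d, ∀ 𝒯 : Finset (Fin N), 𝒯.card ≤ T_X →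
      ∀ x x' : Fin K → F,
        PMF.map (fun z : Fin (v ℓ) → F => fun i : 𝒯 =>
            (∑ j : Fin K, G ℓ j i.1 * x j) + ∑ t : Fin (v ℓ), H ℓ t i.1 * z t)
          (PMF.uniformOfFintype (Fin (v ℓ) → F)) =
        PMF.map (fun z : Fin (v ℓ) → F => fun i : 𝒯 =>
            (∑ j : Fin K, G ℓ j i.1 * x' j) + ∑ t : Fin (v ℓ), H ℓ t i.1 * z t)
          (PMF.uniformOfFintype (Fin (v ℓ) → F)))
    (hprivG : ∀ 𝒯 : Finset (Fin N), 𝒯.card ≤ T →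
      ∀ Γ Γ' : Fin K → F, Γ ∈ W → Γ' ∈ W →
        PMF.map (fun z : Fin vG → F => fun i : 𝒯 =>
            (∑ j : Fin K, C j i.1 * Γ j) + ∑ t : Fin vG, D t i.1 * z t)
          (PMF.uniformOfFintype (Fin vG → F)) =
        PMF.map (fun z : Fin vG → F => fun i : 𝒯 =>
            (∑ j : Fin K, C j i.1 * Γ' j) + ∑ t : Fin vG, D t i.1 * z t)
          (PMF.uniformOfFintype (Fin vG → F)))
    (hnokeys : T = 0 → vG = 0)
    (hdec : ∃ h : (Fin N → F) → (Fin K → F),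
      ∀ (X : Fin K → Fin d → F) (Γ : Fin K → F), Γ ∈ W →
        ∀ (zX : (ℓ : Fin d) → Fin (v ℓ) → F) (zG : Fin vG → F),
          h (fun i =>
              (∏ ℓ : Fin d,
                ((∑ j : Fin K, G ℓ j i * X j ℓ) + ∑ t : Fin (v ℓ), H ℓ t i * zX ℓ t)) *
              ((∑ j : Fin K, C j i * Γ j) + ∑ t : Fin vG, D t i * zG t)) =
            fun j => (∏ ℓ : Fin d, X j ℓ) * Γ j) :
    (T_X + K - 1) * d + T + r ≤ N := by
  subst hr
  have : Nonempty (Fin K) := ⟨⟨0, hK⟩⟩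
  simpa using strong_private_lower_bound_general hTX W hW (fun ℓ ↦ (G ℓ).transpose.mulVecLin)
    (fun ℓ ↦ (H ℓ).transpose.mulVecLin) (C.transpose.mulVecLin ∘ₗ W.subtype) D.transpose.mulVecLin
    (fun ℓ 𝒯 h𝒯 x x' ↦ range_eq_of_map_uniformOfFintype_eq (hprivX ℓ 𝒯 h𝒯 x x'))
    (fun 𝒯 h𝒯 Γ Γ' ↦ range_eq_of_map_uniformOfFintype_eq (hprivG 𝒯 h𝒯 Γ Γ' Γ.2 Γ'.2))
    (hdec.imp fun h hh X Γ ↦ hh X Γ Γ.2)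
end

section
/- Let F be a field, d ≥ 1, and let p be a multivariate polynomial in M variables over F of total degree at most d. Define f′ : (F^M)^d → F by f′(Z_1, …, Z_d) = Σ_{S ⊆ {1,…,d}} (−1)^{|S|} p(Σ_{j∈S} Z_j). Then f′ is multilinear: for each argument index j, the map Z_j ↦ f′(Z_1, …, Z_d) (with the other arguments fixed) is F-linear, i.e., additive and homogeneous of degree one. -/
/-!
Up to sign, the alternating sum over subsets `S` of `A (∑ k ∈ S, Z k, …, ∑ k ∈ S, Z k)`, for `A`
multilinear in variables indexed by `κ`, collects by inclusion–exclusion exactly the terms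
`A (Z ∘ g)` with `g : κ → ι` surjective. When `κ` has at most as many elements as `ι`, such a `g` is
a bijection, so each `Z k` occurs exactly once in each surviving term. A monomial of degree at most
`d` is the restriction to the diagonal of a multilinear form in at most `d` variables.
-/

open Finset

section Polarization

variable {ι κ V W : Type*} [Fintype ι]

/-- The polarization `Z ↦ ∑ S, (-1) ^ #S • f (∑ k ∈ S, Z k)` of a function `f`, as a function of a
family of vectors indexed by `ι`. The signs are integers so that `W` can be any additive group. -/
def polarization [AddCommMonoid V] [AddCommGroup W] (f : V → W) (Z : ι → V) : W :=
  ∑ S : Finset ι, (-1 : ℤ) ^ #S • f (∑ k ∈ S, Z k)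

theorem polarization_eq_sum_mul {R : Type*} [AddCommMonoid V] [Ring R] (f : V → R) (Z : ι → V) :
    polarization f Z = ∑ S : Finset ι, (-1 : R) ^ #S * f (∑ k ∈ S, Z k) := by
  simp [polarization, zsmul_eq_mul]

theorem polarization_sum_mul {R α : Type*} [AddCommMonoid V] [Ring R] (s : Finset α)
    (c : α → R) (f : α → V → R) (Z : ι → V) :
    polarization (fun v ↦ ∑ a ∈ s, c a * f a v) Z = ∑ a ∈ s, c a * polarization (f a) Z := by
  simp only [polarization, smul_sum, mul_sum, mul_smul_comm]
  exact sum_comm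

variable [DecidableEq ι] [Fintype κ] [DecidableEq κ]

theorem sum_neg_one_pow_card_zsmul_sum_piFinset [AddCommGroup W] (f : (κ → ι) → W) :
    ∑ S : Finset ι, (-1 : ℤ) ^ #S • ∑ g ∈ Fintype.piFinset fun _ : κ ↦ S, f g =
      (-1 : ℤ) ^ Fintype.card ι • ∑ g with Function.Surjective g, f g := by
  let avoiding (k : ι) : Finset (κ → ι) := {g | ∀ i, g i ≠ k}
  have surjective_eq_inf : ({g | Function.Surjective g} : Finset (κ → ι)) =
      univ.inf fun k ↦ (avoiding k)ᶜ := by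
    ext g
    rw [mem_filter_univ]
    simp [avoiding, mem_inf, Function.Surjective]
  have inf_avoiding (S : Finset ι) : S.inf avoiding = Fintype.piFinset fun _ : κ ↦ Sᶜ := by
    ext g
    simp only [avoiding, mem_inf, mem_compl, mem_filter_univ, Fintype.mem_piFinset]
    exact ⟨fun h i hi ↦ h _ hi i rfl, fun h k hk i hik ↦ h i (hik ▸ hk)⟩
  have neg_one_pow_card_compl (S : Finset ι) :
      (-1 : ℤ) ^ #Sᶜ = (-1) ^ Fintype.card ι * (-1) ^ #S := by
    rw [← card_compl_add_card S, pow_add, mul_assoc, ← mul_pow]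
    simp
  rw [surjective_eq_inf, inclusion_exclusion_sum_inf_compl, powerset_univ,
    ← compl_bijective.sum_comp, smul_sum]
  refine sum_congr rfl fun S _ ↦ ?_
  rw [inf_avoiding, smul_smul, ← neg_one_pow_card_compl]

theorem sum_surjective_eq_sum_equiv [AddCommMonoid W] (hcard : Fintype.card κ ≤ Fintype.card ι)
    (f : (κ → ι) → W) : ∑ g with Function.Surjective g, f g = ∑ e : κ ≃ ι, f e := by
  symm
  refine sum_bij (fun e _ ↦ e) (fun e _ ↦ by simpa using e.surjective)
    (fun _ _ _ _ h ↦ DFunLike.coe_injective h) (fun g hg ↦ ?_) fun _ _ ↦ rfl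
  have surjective : Function.Surjective g := by simpa using hg
  exact ⟨Equiv.ofBijective g (surjective.bijective_of_nat_card_le (by simpa using hcard)),
    mem_univ _, rfl⟩

theorem polarization_diagonal {R : Type*} [Semiring R] [AddCommMonoid V] [Module R V]
    [AddCommGroup W] [Module R W] (A : MultilinearMap R (fun _ : κ ↦ V) W)
    (hcard : Fintype.card κ ≤ Fintype.card ι) (Z : ι → V) :
    polarization (fun v ↦ A fun _ ↦ v) Z =
      (-1 : ℤ) ^ Fintype.card ι • ∑ e : κ ≃ ι, A fun i ↦ Z (e i) := by
  simp only [polarization, A.map_sum_finset]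
  rw [sum_neg_one_pow_card_zsmul_sum_piFinset, sum_surjective_eq_sum_equiv hcard]

end Polarization

section MvPolynomial

variable {R σ : Type*}

/-- The multilinear form `(x_i)_i ↦ ∏ i, x_i i` whose restriction to the diagonal is the monomial
with exponent `m`. It has one argument for each variable of the monomial, counted with
multiplicity, so its arguments are indexed by `m.toMultiset`. -/
noncomputable def monomialForm (R : Type*) [CommSemiring R] [DecidableEq σ] (m : σ →₀ ℕ) :
    MultilinearMap R (fun _ : m.toMultiset ↦ σ → R) R :=
  (MultilinearMap.mkPiAlgebra R m.toMultiset R).compLinearMap fun i ↦ LinearMap.proj i.1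

theorem monomialForm_diagonal [CommSemiring R] [DecidableEq σ] (m : σ →₀ ℕ) (x : σ → R) :
    (monomialForm R m fun _ ↦ x) = ∏ i ∈ m.support, x i ^ m i := by
  simp only [monomialForm, MultilinearMap.compLinearMap_apply, MultilinearMap.mkPiAlgebra_apply,
    LinearMap.proj_apply]
  calc ∏ i : m.toMultiset, x i.1
    _ = (m.toMultiset.map x).prod := congrArg Multiset.prod (m.toMultiset.map_univ_comp_coe x)
    _ = ∏ i ∈ m.support, x i ^ m i := by
      rw [prod_multiset_map_count, Finsupp.toFinset_toMultiset]
      simp only [Finsupp.count_toMultiset]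

theorem card_toMultiset_le_totalDegree [CommSemiring R] [DecidableEq σ] {p : MvPolynomial σ R}
    {m : σ →₀ ℕ} (hm : m ∈ p.support) :
    Fintype.card m.toMultiset ≤ p.totalDegree := by
  rw [Multiset.card_coe, Finsupp.card_toMultiset]
  exact MvPolynomial.le_totalDegree hm

theorem polarization_multilinear_general {ι : Type*} [Fintype ι] [CommRing R]
    (p : MvPolynomial σ R) (hp : p.totalDegree ≤ Fintype.card ι) :
    ∃ L : MultilinearMap R (fun _ : ι ↦ σ → R) R, ∀ Z : ι → σ → R,
      L Z = ∑ S : Finset ι, (-1 : R) ^ #S * MvPolynomial.eval (∑ k ∈ S, Z k) p := by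
  classical
  refine ⟨∑ m ∈ p.support, p.coeff m • (-1 : ℤ) ^ Fintype.card ι •
    ∑ e : m.toMultiset ≃ ι, (monomialForm R m).domDomCongr e, fun Z ↦ ?_⟩
  rw [← polarization_eq_sum_mul (fun x ↦ MvPolynomial.eval x p)]
  simp only [MvPolynomial.eval_eq, ← monomialForm_diagonal, polarization_sum_mul]
  rw [_root_.sum_apply]
  refine sum_congr rfl fun m hm ↦ ?_
  rw [polarization_diagonal _ ((card_toMultiset_le_totalDegree hm).trans hp)]
  simp

end MvPolynomial

/-- **Multilinearity of the polarization of a polynomial.**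
For a polynomial `p` of total degree at most `d`, the polarization
`f'(Z_1,…,Z_d) = Σ_{S ⊆ [d]} (−1)^{|S|} p(Σ_{j∈S} Z_j)` is linear (additive and
homogeneous) in each argument `Z_j`. -/
theorem polarization_multilinear (F : Type*) [Field F] (M d : ℕ) (hd : 1 ≤ d)
    (p : MvPolynomial (Fin M) F) (hp : p.totalDegree ≤ d) :
    ∀ (j : Fin d) (Z : Fin d → Fin M → F) (a b : Fin M → F) (c : F),
      ((∑ S : Finset (Fin d), (-1 : F) ^ S.card *
          MvPolynomial.eval (∑ k ∈ S, Function.update Z j (a + b) k) p) =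
        (∑ S : Finset (Fin d), (-1 : F) ^ S.card *
          MvPolynomial.eval (∑ k ∈ S, Function.update Z j a k) p) +
        (∑ S : Finset (Fin d), (-1 : F) ^ S.card *
          MvPolynomial.eval (∑ k ∈ S, Function.update Z j b k) p)) ∧
      ((∑ S : Finset (Fin d), (-1 : F) ^ S.card *
          MvPolynomial.eval (∑ k ∈ S, Function.update Z j (c • a) k) p) =
        c * ∑ S : Finset (Fin d), (-1 : F) ^ S.card *
          MvPolynomial.eval (∑ k ∈ S, Function.update Z j a k) p) := by
  intro j Z a b c
  obtain ⟨L, hL⟩ := polarization_multilinear_general p (hp.trans_eq (Fintype.card_fin d).symm)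
  simp only [← hL]
  exact ⟨L.map_update_add Z j a b, L.map_update_smul Z j c a⟩
end

section
/- Let n, r, m, d be positive integers with 1 ≤ r ≤ n and n dividing m. For each i ∈ {1,…,n} let E_i : ℝ^{m×d} → ℝ^{c_i} be a linear map with c_i ≤ r·m·d/n (each worker stores an r/n fraction of the data in linearly coded form). Suppose 𝒩 ⊆ {1,…,n} is a subset of workers such that there exist functions φ_i (computing worker i's message from its stored data E_i(X) and the weight vector w) and a decoder h with h((φ_i(E_i(X), w))_{i∈𝒩}) = XᵀXw for all X ∈ ℝ^{m×d} and all w ∈ ℝ^d. Then |𝒩| ≥ ⌈n/r⌉. Consequently, the optimal recovery threshold R* for distributed linear regression satisfies R* ≥ ⌈n/r⌉, so the LCC threshold R_LCC = 2⌈n/r⌉ − 1 is within a factor of 2 of optimal. -/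
/-!
If the workers' stored data all vanish on `X`, their messages are those they would send for the
zero matrix, so the decoder returns `0 = XᴴXw` for every `w`; hence `XᴴX = 0` and `X = 0`. The
stored linear data therefore determine `X`, and a dimension count bounds the number of workers.
-/

open Matrix Module

theorem finrank_le_sum_finrank_of_forall_apply_eq_zero {R M ι : Type*} {V : ι → Type*} [Ring R]
    [StrongRankCondition R] [AddCommGroup M] [Module R M] [Fintype ι] [∀ i, AddCommGroup (V i)]
    [∀ i, Module R (V i)] [∀ i, Module.Free R (V i)] [∀ i, Module.Finite R (V i)]
    (f : ∀ i, M →ₗ[R] V i) (hf : ∀ x, (∀ i, f i x = 0) → x = 0) :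
    finrank R M ≤ ∑ i, finrank R (V i) := by
  have pi_injective : Function.Injective (LinearMap.pi f) :=
    (injective_iff_map_eq_zero _).2 fun x hx => hf x (congrFun hx)
  simpa only [finrank_pi_fintype] using LinearMap.finrank_le_finrank_of_injective pi_injective

theorem ceilDiv_le_card_of_le_sum {ι : Type*} {s : Finset ι} {c : ι → ℕ} {n r N : ℕ}
    (hr : 0 < r) (hN : 0 < N) (hsum : N ≤ ∑ i ∈ s, c i) (hc : ∀ i ∈ s, c i * n ≤ r * N) :
    n ⌈/⌉ r ≤ s.card := by
  refine (ceilDiv_le_iff_le_mul hr).2 (Nat.le_of_mul_le_mul_left ?_ hN)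
  calc
    N * n ≤ (∑ i ∈ s, c i) * n := Nat.mul_le_mul_right n hsum
    _ = ∑ i ∈ s, c i * n := Finset.sum_mul ..
    _ ≤ s.card • (r * N) := Finset.sum_le_card_nsmul s _ _ hc
    _ = N * (r * s.card) := by rw [smul_eq_mul]; ring

section Recovery

variable {R m d ι : Type*} [Fintype m] [Fintype d] {S W : ι → Type*}

/-- Correctness of a one-round distributed scheme for linear regression: from the messages
`φ i (E i X) w` of the workers `i : ι` that respond, the decoder `h` recovers `XᴴXw`, for every
feature matrix `X` and weight vector `w`. The conjugate transpose allows for complex data; it is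
the transpose when the star operation is trivial, as over `ℝ`. -/
def RecoversGramMulVec [NonUnitalNonAssocSemiring R] [Star R] (E : ∀ i, Matrix m d R → S i)
    (φ : ∀ i, S i → (d → R) → W i) (h : (∀ i, W i) → d → R) : Prop :=
  ∀ X w, h (fun i => φ i (E i X) w) = (Xᴴ * X) *ᵥ w

theorem RecoversGramMulVec.conjTranspose_mul_self_eq [NonAssocSemiring R] [Star R]
    {E : ∀ i, Matrix m d R → S i} {φ : ∀ i, S i → (d → R) → W i} {h : (∀ i, W i) → d → R}
    (hrec : RecoversGramMulVec E φ h) {X Y : Matrix m d R} (hXY : ∀ i, E i X = E i Y) :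
    Xᴴ * X = Yᴴ * Y := by
  refine mulVec_injective (funext fun w => ?_)
  rw [← hrec X w, ← hrec Y w]
  simp only [hXY]

variable [Ring R] [PartialOrder R] [StarRing R] [StarOrderedRing R] [NoZeroDivisors R]
  [∀ i, AddCommGroup (S i)] [∀ i, Module R (S i)] {E : ∀ i, Matrix m d R →ₗ[R] S i}
  {φ : ∀ i, S i → (d → R) → W i} {h : (∀ i, W i) → d → R}

theorem RecoversGramMulVec.eq_zero (hrec : RecoversGramMulVec (fun i => E i) φ h)
    {X : Matrix m d R} (hX : ∀ i, E i X = 0) : X = 0 := by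
  have gram_eq : Xᴴ * X = 0ᴴ * (0 : Matrix m d R) :=
    hrec.conjTranspose_mul_self_eq fun i => (hX i).trans (map_zero (E i)).symm
  exact conjTranspose_mul_self_eq_zero.1 (gram_eq.trans (Matrix.mul_zero _))

theorem linear_regression_recovery_lower_bound_general [StrongRankCondition R] [Fintype ι]
    [Nonempty m] [Nonempty d] [∀ i, Module.Free R (S i)] [∀ i, Module.Finite R (S i)] {n r : ℕ}
    (hr : 0 < r) (hS : ∀ i, finrank R (S i) * n ≤ r * (Fintype.card m * Fintype.card d))
    (hrec : RecoversGramMulVec (fun i => E i) φ h) :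
    n ⌈/⌉ r ≤ Fintype.card ι := by
  have card_le : Fintype.card m * Fintype.card d ≤ ∑ i, finrank R (S i) := by
    simpa only [finrank_matrix, finrank_self, mul_one, Nat.card_eq_fintype_card] using
      finrank_le_sum_finrank_of_forall_apply_eq_zero E fun _ => hrec.eq_zero
  exact ceilDiv_le_card_of_le_sum hr (Nat.mul_pos Fintype.card_pos Fintype.card_pos) card_le
    fun i _ => hS i

end Recovery

/-- **Lower bound on the recovery threshold for distributed linear regression.**
Each worker `i` stores a linearly coded fraction `E_i(X) ∈ ℝ^{c_i}` of the feature
matrix `X ∈ ℝ^{m×d}` with `c_i ≤ r·m·d/n` (stated as `c_i · n ≤ r·m·d`), computes an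
arbitrary message `φ_i(E_i(X), w)` from its stored data and the weight vector `w`, and a
decoder `h` recovers `XᵀXw` from the messages of the workers in `𝒩` for all `X` and `w`.
Then `|𝒩| ≥ ⌈n/r⌉` (written `(n + r − 1)/r`); hence the optimal recovery threshold
satisfies `R* ≥ ⌈n/r⌉` and LCC's `2⌈n/r⌉ − 1` is within a factor `2` of optimal. -/
theorem linear_regression_recovery_lower_bound (n r m d : ℕ)
    (hr1 : 1 ≤ r) (hrn : r ≤ n) (hm : 0 < m) (hd : 0 < d) (hnm : n ∣ m)
    (c : Fin n → ℕ) (hc : ∀ i, c i * n ≤ r * m * d)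
    (E : (i : Fin n) → Matrix (Fin m) (Fin d) ℝ →ₗ[ℝ] (Fin (c i) → ℝ))
    (𝒩 : Finset (Fin n))
    (Wt : Fin n → Type*)
    (φ : (i : Fin n) → (Fin (c i) → ℝ) → (Fin d → ℝ) → Wt i)
    (h : ((i : 𝒩) → Wt i.1) → (Fin d → ℝ))
    (hcorrect : ∀ (X : Matrix (Fin m) (Fin d) ℝ) (w : Fin d → ℝ),
      h (fun i => φ i.1 (E i.1 X) w) = (X.transpose * X).mulVec w) :
    (n + r - 1) / r ≤ 𝒩.card := by
  have := Fin.pos_iff_nonempty.1 hm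
  have := Fin.pos_iff_nonempty.1 hd
  simpa only [Fintype.card_coe, Nat.ceilDiv_eq_add_pred_div] using
    linear_regression_recovery_lower_bound_general (E := fun i : 𝒩 => E i) (φ := fun i => φ i)
      hr1 (fun i => by simpa [mul_assoc] using hc i) hcorrect
end

section
/- Let V and U be sets, f : V → U any function, and N, K, B, S, A natural numbers with B ≥ 1 and S + 2A ≤ B − 1. Let γ : {1,…,N} → {1,…,K} be an assignment of workers to data blocks such that |γ^{-1}(j)| ≥ B for every j ∈ {1,…,K}, and let worker i compute f(X_{γ(i)}). Then for every subset 𝒦 ⊆ {1,…,N} with |𝒦| ≥ N − S, every reported vector ỹ : 𝒦 → U, and any two datasets X, X′ ∈ V^K such that |{i ∈ 𝒦 : ỹ_i ≠ f(X_{γ(i)})}| ≤ A and |{i ∈ 𝒦 : ỹ_i ≠ f(X′_{γ(i)})}| ≤ A, one has f(X_j) = f(X′_j) for every j ∈ {1,…,K}. (Hence the uncoded repetition scheme, which replicates every X_i on between ⌊N/K⌋ and ⌈N/K⌉ workers, tolerates S stragglers and A adversaries whenever S + 2A ≤ ⌊N/K⌋ − 1.) -/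
/-!
Delete from the workers holding block `j` the at most `S` stragglers: more than `2A` of them still
report. A report cannot equal both `f (X j)` and `f (X' j)` when these differ, so each of them would
be counted as an error for `X` or for `X'`, while there are at most `A` errors of each kind.
-/

section EncardCounting

variable {ι U : Type*}

theorem eq_of_encard_ne_add_encard_ne_lt {s : Set ι} {y : ι → U} {u u' : U}
    (h : {i ∈ s | y i ≠ u}.encard + {i ∈ s | y i ≠ u'}.encard < s.encard) : u = u' := by
  by_contra hne
  have hcover : s ⊆ {i ∈ s | y i ≠ u} ∪ {i ∈ s | y i ≠ u'} := by
    intro i hi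
    obtain hu | hu' : y i ≠ u ∨ y i ≠ u' := by
      by_contra! hboth
      exact hne (hboth.1.symm.trans hboth.2)
    · exact Or.inl ⟨hi, hu⟩
    · exact Or.inr ⟨hi, hu'⟩
  exact h.not_ge ((Set.encard_le_encard hcover).trans (Set.encard_union_le _ _))

theorem encard_le_encard_inter_add_encard_compl (s t : Set ι) :
    s.encard ≤ (s ∩ t).encard + tᶜ.encard := by
  simpa only [Set.sdiff_compl] using Set.encard_le_encard_sdiff_add_encard s tᶜ

theorem encard_compl_le_of_card_sub_le_card [Fintype ι] {t : Finset ι} {n : ℕ}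
    (h : Fintype.card ι - n ≤ t.card) : ((t : Set ι)ᶜ).encard ≤ n := by
  classical
  rw [← Finset.coe_compl, Set.encard_coe_eq_coe_finsetCard, Finset.card_compl, Nat.cast_le]
  exact tsub_le_iff_tsub_le.mp h

end EncardCounting

theorem repetition_tolerates_stragglers_adversaries_general {ι κ V U : Type*} (f : V → U)
    {S A : ℕ∞} (γ : ι → κ) {j : κ} (hj : S + 2 * A < {i | γ i = j}.encard)
    {𝒦 : Set ι} (h𝒦 : 𝒦ᶜ.encard ≤ S) {y : ι → U} {X X' : κ → V}
    (hX : {i | i ∈ 𝒦 ∧ y i ≠ f (X (γ i))}.encard ≤ A)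
    (hX' : {i | i ∈ 𝒦 ∧ y i ≠ f (X' (γ i))}.encard ≤ A) :
    f (X j) = f (X' j) := by
  let responding : Set ι := {i | γ i = j} ∩ 𝒦
  have errors_le {Z : κ → V} (hZ : {i | i ∈ 𝒦 ∧ y i ≠ f (Z (γ i))}.encard ≤ A) :
      {i ∈ responding | y i ≠ f (Z j)}.encard ≤ A := by
    refine (Set.encard_le_encard ?_).trans hZ
    rintro i ⟨⟨rfl, hi𝒦⟩, hi⟩
    exact ⟨hi𝒦, hi⟩
  have lt_responding : 2 * A < responding.encard := by
    refine lt_of_add_lt_add_left (a := S) (hj.trans_le ?_)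
    calc {i | γ i = j}.encard
        ≤ responding.encard + 𝒦ᶜ.encard := encard_le_encard_inter_add_encard_compl _ _
      _ ≤ S + responding.encard := by rw [add_comm]; gcongr
  apply eq_of_encard_ne_add_encard_ne_lt (s := responding) (y := y)
  calc _ ≤ A + A := add_le_add (errors_le hX) (errors_le hX')
    _ = 2 * A := (two_mul A).symm
    _ < responding.encard := lt_responding

/-- **Straggler and adversary tolerance of the uncoded repetition scheme.**
If every data block `j` is assigned to at least `B` workers (worker `i` computes
`f(X_{γ(i)})`) and `S + 2A ≤ B − 1`, then for any set `𝒦` of at least `N − S` workers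
and any reported vector `ỹ` differing from the true results of `X` in at most `A`
positions of `𝒦` and likewise for `X'`, all outputs agree: `f(X_j) = f(X'_j)`. -/
theorem repetition_tolerates_stragglers_adversaries (V U : Type*) (f : V → U)
    (N K B S A : ℕ) (hB : 1 ≤ B) (hSA : S + 2 * A ≤ B - 1)
    (γ : Fin N → Fin K)
    (hγ : ∀ j : Fin K, B ≤ (Finset.univ.filter (fun i => γ i = j)).card) :
    ∀ 𝒦 : Finset (Fin N), N - S ≤ 𝒦.card →
      ∀ ytil : Fin N → U, ∀ X X' : Fin K → V,
        Set.ncard {i : Fin N | i ∈ 𝒦 ∧ ytil i ≠ f (X (γ i))} ≤ A →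
        Set.ncard {i : Fin N | i ∈ 𝒦 ∧ ytil i ≠ f (X' (γ i))} ≤ A →
        ∀ j : Fin K, f (X j) = f (X' j) := by
  intro 𝒦 h𝒦 ytil X X' hX hX' j
  have hj : ((S + 2 * A : ℕ) : ℕ∞) < {i | γ i = j}.encard := by
    rw [← Finset.coe_filter_univ, Set.encard_coe_eq_coe_finsetCard, Nat.cast_lt]
    exact (Nat.lt_of_le_sub_one hB hSA).trans_le (hγ j)
  exact repetition_tolerates_stragglers_adversaries_general f γ (mod_cast hj)
    (encard_compl_le_of_card_sub_le_card (by rwa [Fintype.card_fin]))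
    (Set.encard_le_coe_iff_finite_ncard_le.mpr ⟨Set.toFinite _, hX⟩)
    (Set.encard_le_coe_iff_finite_ncard_le.mpr ⟨Set.toFinite _, hX'⟩)
end
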